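/- arXiv:1402.6370 — 4 statements merged into one kernel-verified Lean document; each statement's English description precedes it below -/
import Mathlib

section
/- Let n ≥ 2, 1/2 < s < 1, ε > 0, and let L, C > 0. Let u : ℝⁿ → ℝ be Lipschitz with constant L and semiconcave with constant C. Write points of ℝⁿ as (y₁, ȳ) with y₁ ∈ ℝ, ȳ ∈ ℝ^{n−1}. If the function y ↦ (u(y₁, ȳ) − u(y₁, 0̄))/(ε² y₁² + ε^{−2/(n−1)} |ȳ|²)^{(n+2s)/2} is Lebesgue integrable on ℝⁿ, then (1−s)·∫_{ℝⁿ} (u(y₁, ȳ) − u(y₁, 0̄))/(ε² y₁² + ε^{−2/(n−1)} |ȳ|²)^{(n+2s)/2} dy ≤ C₁·ε^{2s/(n−1)}. -/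
open MeasureTheory

noncomputable def surfOmega (k : ℕ) : ℝ := 2 * Real.pi ^ ((k : ℝ) / 2) / Real.Gamma ((k : ℝ) / 2)

noncomputable def mu1 (s L C : ℝ) : ℝ := L ^ (2 - 2 * s) * (C / 2) ^ (2 * s - 1) / (2 * s - 1)

noncomputable def C1 (n : ℕ) (s L C : ℝ) : ℝ :=
  (Real.sqrt Real.pi * Real.Gamma (((n : ℝ) - 1) / 2 + s) / Real.Gamma ((n : ℝ) / 2 + s)) *
    (mu1 s L C * surfOmega (n - 1) / 2)

noncomputable def C2 (n : ℕ) (s : ℝ) : ℝ :=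
  surfOmega (n - 1) * Real.Gamma (((n : ℝ) - 1) / 2) * Real.Gamma (s + 1 / 2) /
    (2 * Real.Gamma ((n : ℝ) / 2 + s))

noncomputable def mu0 (n : ℕ) (s L C η₀ : ℝ) : ℝ :=
  C1 n s L C ^ (1 - (n : ℝ)) * (C2 n s)⁻¹ * (η₀ / 2) ^ (n : ℝ)

/-- Second-order increment `δ(u,x,y) = u(x+y) + u(x-y) - 2u(x)`. -/
noncomputable def delta2 {n : ℕ} (u : EuclideanSpace ℝ (Fin n) → ℝ)
    (x y : EuclideanSpace ℝ (Fin n)) : ℝ :=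
  u (x + y) + u (x - y) - 2 * u x

/-- Integrand `δ(u,x,y)/|A⁻¹ y|^(n+2s)`. -/
noncomputable def kernelA {n : ℕ} (s : ℝ) (A : Matrix (Fin n) (Fin n) ℝ)
    (u : EuclideanSpace ℝ (Fin n) → ℝ) (x y : EuclideanSpace ℝ (Fin n)) : ℝ :=
  delta2 u x y /
    ‖(EuclideanSpace.equiv (Fin n) ℝ).symm (A⁻¹.mulVec (EuclideanSpace.equiv (Fin n) ℝ y))‖ ^
      ((n : ℝ) + 2 * s)

/-- The linear operator `L_A u(x) = (1/2) ∫ δ(u,x,y)/|A⁻¹ y|^(n+2s) dy`. -/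
noncomputable def LA {n : ℕ} (s : ℝ) (A : Matrix (Fin n) (Fin n) ℝ)
    (u : EuclideanSpace ℝ (Fin n) → ℝ) (x : EuclideanSpace ℝ (Fin n)) : ℝ :=
  (1 / 2) * ∫ y, kernelA s A u x y


lemma aux_int1 (p : ℝ) (hp : 1/2 < p) : Integrable (fun t : ℝ => (1 + t^2) ^ (-p)) := by
  have := integrable_rpow_neg_one_add_norm_sq (E := ℝ) (r := 2*p) (μ := volume) (by simp; linarith)
  simpa [neg_div] using this

lemma aux_val1 (p : ℝ) (hp : 1/2 < p) : ∫ t : ℝ, (1 + t^2) ^ (-p) =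
    Real.sqrt Real.pi * Real.Gamma (p - 1/2) / Real.Gamma p := by
  have hG := Real.Gamma_pos_of_pos (show 0 < p by linarith)
  rw [eq_div_iff hG.ne']
  have h1 : ∀ t : ℝ, ∫ x in Set.Ioi (0:ℝ), x ^ (p-1) * Real.exp (-((1+t^2) * x)) =
      (1 + t^2) ^ (-p) * Real.Gamma p := by
    intro t
    rw [Real.integral_rpow_mul_exp_neg_mul_Ioi (by linarith) (by positivity), one_div,
      Real.inv_rpow (by positivity), Real.rpow_neg (by positivity)]
  have hint : Integrable (Function.uncurry fun (t x : ℝ) => x ^ (p-1) * Real.exp (-((1+t^2) * x)))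
      ((volume : Measure ℝ).prod (volume.restrict (Set.Ioi (0:ℝ)))) := by
    rw [integrable_prod_iff]
    · constructor
      · refine Filter.Eventually.of_forall fun t => ?_
        have := integrableOn_rpow_mul_exp_neg_mul_rpow (p := 1) (s := p - 1) (b := 1+t^2)
          (by linarith) (by norm_num) (by positivity)
        simp only [Real.rpow_one, neg_mul] at this
        exact this
      · refine ((aux_int1 p hp).mul_const (Real.Gamma p)).congr ?_
        refine Filter.Eventually.of_forall fun t => ?_
        simp only [Function.uncurry]
        rw [← h1 t]
        refine setIntegral_congr_fun measurableSet_Ioi fun x hx => ?_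
        have : (0:ℝ) < x := hx
        rw [Real.norm_of_nonneg (by positivity)]
    · apply Measurable.aestronglyMeasurable
      simp only [Function.uncurry_def]
      fun_prop
  rw [← integral_mul_const]
  simp_rw [← h1]
  rw [integral_integral_swap hint]
  have h2 : ∀ x ∈ Set.Ioi (0:ℝ), ∫ t : ℝ, x ^ (p-1) * Real.exp (-((1+t^2) * x)) =
      Real.sqrt Real.pi * (x ^ (p - 1/2 - 1) * Real.exp (-(1*x))) := by
    intro x hx
    have hx : 0 < x := hx
    have : ∀ t : ℝ, x ^ (p-1) * Real.exp (-((1+t^2) * x)) =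
        (x ^ (p-1) * Real.exp (-x)) * Real.exp (-x * t^2) := by
      intro t
      rw [mul_assoc, ← Real.exp_add]; ring_nf
    simp_rw [this]
    rw [integral_const_mul, integral_gaussian, Real.sqrt_div Real.pi_pos.le,
      show p - 1/2 - 1 = (p-1) - 1/2 by ring, Real.rpow_sub hx (p-1), ← Real.sqrt_eq_rpow]
    simp; ring
  rw [setIntegral_congr_fun measurableSet_Ioi h2, integral_const_mul,
    Real.integral_rpow_mul_exp_neg_mul_Ioi (by linarith) (by norm_num)]
  simp

lemma aux_eq2 (p a b : ℝ) (ha : 0 < a) (hb : 0 < b) (t : ℝ) :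
    1 / (a * t^2 + b) ^ p = b ^ (-p) * (1 + (Real.sqrt (a/b) * t)^2) ^ (-p) := by
  rw [← Real.mul_rpow hb.le (by positivity), Real.rpow_neg (by positivity), one_div, mul_pow,
    Real.sq_sqrt (by positivity)]
  congr 2
  field_simp
  ring

lemma aux_int2 (p a b : ℝ) (hp : 1/2 < p) (ha : 0 < a) (hb : 0 < b) :
    Integrable (fun t : ℝ => 1 / (a * t^2 + b) ^ p) := by
  simp_rw [aux_eq2 p a b ha hb]
  exact ((aux_int1 p hp).comp_mul_left' (Real.sqrt_pos.2 (div_pos ha hb)).ne').const_mul _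

lemma aux_val2 (p a b : ℝ) (hp : 1/2 < p) (ha : 0 < a) (hb : 0 < b) :
    ∫ t : ℝ, 1 / (a * t^2 + b) ^ p = b ^ (1/2-p) / a ^ (1/2:ℝ) *
      (Real.sqrt Real.pi * Real.Gamma (p - 1/2) / Real.Gamma p) := by
  simp_rw [aux_eq2 p a b ha hb]
  rw [integral_const_mul, Measure.integral_comp_mul_left (fun t : ℝ => (1+t^2)^(-p)),
    aux_val1 p hp, smul_eq_mul, ← mul_assoc]
  congr 1
  rw [abs_of_nonneg (by positivity), Real.sqrt_div ha.le, inv_div, Real.sqrt_eq_rpow,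
    Real.sqrt_eq_rpow, sub_eq_add_neg, Real.rpow_add hb]
  ring

noncomputable def hfun (L C r : ℝ) : ℝ := min (C / 2 * r^2) (L * r)

lemma aux_rad (s L C : ℝ) (hs : 1/2 < s) (hs1 : s < 1) (hL : 0 < L) (hC : 0 < C) :
    IntegrableOn (fun r : ℝ => hfun L C r * r ^ (-1 - 2*s)) (Set.Ioi 0) ∧
    (1 - s) * ∫ r in Set.Ioi (0:ℝ), hfun L C r * r ^ (-1 - 2*s) =
      L ^ (2 - 2 * s) * (C / 2) ^ (2 * s - 1) / (2 * s - 1) / 2 := by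
  set R := L / (C/2) with hR
  have hRp : 0 < R := by positivity
  have e1 : ∀ r ∈ Set.Ioc 0 R, C/2 * r ^ (1-2*s) = hfun L C r * r ^ (-1 - 2*s) := by
    rintro r ⟨h0, h1⟩
    have : C/2 * r^2 ≤ L * r := by
      rw [hR, le_div_iff₀ (by positivity)] at h1
      nlinarith
    rw [hfun, min_eq_left this, mul_assoc, ← Real.rpow_natCast, ← Real.rpow_add h0]
    congr 2; push_cast; ring
  have e2 : ∀ r ∈ Set.Ioi R, L * r ^ (-2*s) = hfun L C r * r ^ (-1 - 2*s) := by
    intro r h1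
    have h1 : R < r := h1
    have h0 : 0 < r := hRp.trans h1
    have : L * r ≤ C/2 * r^2 := by
      rw [hR, div_lt_iff₀ (by positivity)] at h1
      nlinarith
    rw [hfun, min_eq_right this, mul_assoc, ← Real.rpow_one_add' h0.le (by linarith)]
    congr 2; ring
  have i1 : IntegrableOn (fun r : ℝ => hfun L C r * r ^ (-1 - 2*s)) (Set.Ioc 0 R) := by
    refine IntegrableOn.congr_fun ?_ e1 measurableSet_Ioc
    refine Integrable.const_mul ?_ _
    have := intervalIntegral.intervalIntegrable_rpow' (a := 0) (b := R) (r := 1-2*s) (by linarith)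
    rwa [intervalIntegrable_iff_integrableOn_Ioc_of_le hRp.le] at this
  have i2 : IntegrableOn (fun r : ℝ => hfun L C r * r ^ (-1 - 2*s)) (Set.Ioi R) := by
    refine IntegrableOn.congr_fun ?_ e2 measurableSet_Ioi
    exact Integrable.const_mul (integrableOn_Ioi_rpow_of_lt (by linarith) hRp) _
  have hu : Set.Ioc 0 R ∪ Set.Ioi R = Set.Ioi 0 := Set.Ioc_union_Ioi_eq_Ioi hRp.le
  refine ⟨hu ▸ i1.union i2, ?_⟩
  rw [← hu, setIntegral_union (Set.Ioc_disjoint_Ioi le_rfl) measurableSet_Ioi i1 i2,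
    ← setIntegral_congr_fun measurableSet_Ioc e1, ← setIntegral_congr_fun measurableSet_Ioi e2,
    integral_const_mul, integral_const_mul, integral_Ioi_rpow_of_lt (by linarith) hRp,
    ← intervalIntegral.integral_of_le hRp.le, integral_rpow (Or.inl (by linarith)),
    Real.zero_rpow (by linarith)]
  have k1 : C/2 * R ^ (1 - 2*s + 1) = L ^ (2 - 2 * s) * (C / 2) ^ (2 * s - 1) := by
    rw [hR, Real.div_rpow hL.le (by positivity), show 1 - 2*s + 1 = 2 - 2*s by ring,
      show 2*s-1 = 1 - (2-2*s) by ring, Real.rpow_sub (x := C/2) (by positivity) 1, Real.rpow_one]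
    ring
  have k2 : L * R ^ (-2*s+1) = L ^ (2 - 2 * s) * (C / 2) ^ (2 * s - 1) := by
    rw [hR, Real.div_rpow hL.le (by positivity), show -2*s + 1 = -(2*s-1) by ring,
      Real.rpow_neg (x := C/2) (by positivity), show 2 - 2*s = 1 + -(2*s-1) by ring,
      Real.rpow_add hL, Real.rpow_one]
    field_simp
  have k1' : C/2 * ((R ^ (1 - 2*s + 1) - 0) / (1-2*s+1)) = L ^ (2 - 2 * s) * (C / 2) ^ (2 * s - 1) / (2*(1-s)) := by
    rw [← k1, show 1-2*s+1 = 2*(1-s) by ring]; ring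
  have k2' : L * (-R ^ (-2*s+1) / (-2*s+1)) = L ^ (2 - 2 * s) * (C / 2) ^ (2 * s - 1) / (2*s-1) := by
    rw [← k2, show -2*s+1 = -(2*s-1) by ring, neg_div_neg_eq]; ring
  rw [k1', k2']
  have : 1 - s ≠ 0 := by linarith
  have : 2*s-1 ≠ 0 := by linarith
  generalize L ^ (2 - 2 * s) * (C / 2) ^ (2 * s - 1) = K
  have q1 : (1-s) * (K / (2*(1-s))) = K/2 := by field_simp
  have q2 : K / (2*s-1) * (2*s-1) = K := div_mul_cancel₀ _ this
  rw [mul_add, q1]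
  linear_combination -q2/2

noncomputable def gK (m : ℕ) (p a b L C : ℝ) (q : ℝ × EuclideanSpace ℝ (Fin m)) : ℝ :=
  hfun L C ‖q.2‖ / (a * q.1 ^ 2 + b * ‖q.2‖ ^ 2) ^ p

lemma hfun_nonneg {L C r : ℝ} (hL : 0 < L) (hC : 0 < C) (hr : 0 ≤ r) : 0 ≤ hfun L C r := by
  unfold hfun; positivity

lemma gK_slice (m : ℕ) (p a b L C : ℝ) (hp : 1/2 < p) (ha : 0 < a) (hb : 0 < b)
    (z : EuclideanSpace ℝ (Fin m)) :
    Integrable (fun t : ℝ => gK m p a b L C (t, z)) ∧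
    ∫ t : ℝ, gK m p a b L C (t, z) = (b ^ (1/2-p) / a ^ (1/2:ℝ) *
      (Real.sqrt Real.pi * Real.Gamma (p - 1/2) / Real.Gamma p)) *
      (hfun L C ‖z‖ * ‖z‖ ^ (1 - 2 * p)) := by
  rcases eq_or_ne z 0 with rfl | hz
  · simp [gK, hfun]
  · have hz' : 0 < ‖z‖ := norm_pos_iff.2 hz
    have hbz : 0 < b * ‖z‖^2 := by positivity
    have h : ∀ t : ℝ, gK m p a b L C (t, z) =
        hfun L C ‖z‖ * (1 / (a * t^2 + b * ‖z‖^2) ^ p) := fun t => by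
      simp only [gK]; ring
    simp_rw [h]
    refine ⟨(aux_int2 p a _ hp ha hbz).const_mul _, ?_⟩
    rw [integral_const_mul, aux_val2 p a _ hp ha hbz, Real.mul_rpow hb.le (by positivity),
      ← Real.rpow_natCast, ← Real.rpow_mul hz'.le]
    rw [show ((2:ℕ):ℝ) * (1/2-p) = 1 - 2*p by push_cast; ring]
    ring

lemma ball_const (m : ℕ) (hm : 1 ≤ m) :
    (m : ℝ) * (volume : Measure (EuclideanSpace ℝ (Fin m))).real (Metric.ball 0 1) =
      surfOmega m := by
  have : Nonempty (Fin m) := ⟨⟨0, hm⟩⟩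
  have hm' : (0:ℝ) < m := by exact_mod_cast hm
  have hG : 0 < Real.Gamma ((m:ℝ)/2) := Real.Gamma_pos_of_pos (by positivity)
  rw [Measure.real, EuclideanSpace.volume_ball, Real.Gamma_add_one (by simp; positivity)]
  simp only [ENNReal.ofReal_one, one_pow, one_mul, Fintype.card_fin]
  rw [ENNReal.toReal_ofReal (by positivity), surfOmega,
    Real.sqrt_eq_rpow, ← Real.rpow_natCast, ← Real.rpow_mul Real.pi_pos.le]
  rw [show 1/2 * (m:ℝ) = m/2 by ring]
  field_simp

lemma rad_all (m : ℕ) (hm : 1 ≤ m) (s L C : ℝ) (hs : 1/2 < s) (hs1 : s < 1) (hL : 0 < L)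
    (hC : 0 < C) :
    Integrable (fun z : EuclideanSpace ℝ (Fin m) => hfun L C ‖z‖ * ‖z‖ ^ (-(m:ℝ) - 2*s)) ∧
    (1 - s) * ∫ z : EuclideanSpace ℝ (Fin m), hfun L C ‖z‖ * ‖z‖ ^ (-(m:ℝ) - 2*s) =
      surfOmega m * mu1 s L C / 2 := by
  have : Nonempty (Fin m) := ⟨⟨0, hm⟩⟩
  obtain ⟨h1, h2⟩ := aux_rad s L C hs hs1 hL hC
  have e : ∀ r ∈ Set.Ioi (0:ℝ), hfun L C r * r ^ (-1 - 2*s) =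
      r ^ (Module.finrank ℝ (EuclideanSpace ℝ (Fin m)) - 1) • (hfun L C r * r ^ (-(m:ℝ) - 2*s)) := by
    intro r hr
    have hr : 0 < r := hr
    rw [finrank_euclideanSpace_fin, smul_eq_mul, mul_left_comm, ← Real.rpow_natCast,
      ← Real.rpow_add hr, Nat.cast_sub hm]
    congr 2; push_cast; ring
  constructor
  · rw [integrable_fun_norm_addHaar volume (f := fun r => hfun L C r * r ^ (-(m:ℝ) - 2*s))]
    exact h1.congr_fun e measurableSet_Ioi
  · rw [integral_fun_norm_addHaar volume (fun r => hfun L C r * r ^ (-(m:ℝ) - 2*s)),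
      ← setIntegral_congr_fun measurableSet_Ioi e, finrank_euclideanSpace_fin, nsmul_eq_mul,
      smul_eq_mul, ← mul_assoc (m:ℝ), ball_const m hm, mul_left_comm, h2, mu1]
    ring

lemma gK_all (m : ℕ) (hm : 1 ≤ m) (p a b s L C : ℝ) (hp : p = ((m:ℝ) + 1 + 2*s)/2)
    (ha : 0 < a) (hb : 0 < b)
    (hs : 1/2 < s) (hs1 : s < 1) (hL : 0 < L) (hC : 0 < C) :
    Integrable (gK m p a b L C) ∧ (1 - s) * ∫ q, gK m p a b L C q =
     (b ^ (1/2-p) / a ^ (1/2:ℝ) *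
      (Real.sqrt Real.pi * Real.Gamma (p - 1/2) / Real.Gamma p)) *
      (surfOmega m * mu1 s L C / 2) := by
  have hm' : (1:ℝ) ≤ m := by exact_mod_cast hm
  have hp' : 1/2 < p := by rw [hp]; linarith
  have hpe : 1 - 2*p = -(m:ℝ) - 2*s := by rw [hp]; ring
  obtain ⟨r1, r2⟩ := rad_all m hm s L C hs hs1 hL hC
  have hsl := gK_slice m p a b L C hp' ha hb
  rw [hpe] at hsl
  have hi : Integrable (gK m p a b L C) := by
    rw [Measure.volume_eq_prod, integrable_prod_iff']
    · refine ⟨Filter.Eventually.of_forall fun z => (hsl z).1, ?_⟩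
      refine (r1.const_mul (b ^ (1/2-p) / a ^ (1/2:ℝ) *
        (Real.sqrt Real.pi * Real.Gamma (p - 1/2) / Real.Gamma p))).congr ?_
      refine Filter.Eventually.of_forall fun z => ?_
      simp only
      rw [← (hsl z).2]
      refine integral_congr_ae (Filter.Eventually.of_forall fun t => ?_)
      simp only
      rw [Real.norm_of_nonneg]
      exact div_nonneg (hfun_nonneg hL hC (norm_nonneg _)) (by positivity)
    · apply Measurable.aestronglyMeasurable
      unfold gK hfun
      fun_prop
  refine ⟨hi, ?_⟩
  rw [Measure.volume_eq_prod] at hi ⊢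
  rw [integral_prod_symm _ hi]
  simp_rw [fun z => (hsl z).2]
  rw [integral_const_mul, mul_left_comm, r2]

noncomputable def eqv (m : ℕ) :
    ℝ × EuclideanSpace ℝ (Fin m) ≃ᵐ EuclideanSpace ℝ (Fin (m+1)) :=
  (MeasurableEquiv.prodCongr (MeasurableEquiv.refl ℝ)
    (MeasurableEquiv.toLp 2 (Fin m → ℝ)).symm).trans
    ((MeasurableEquiv.piFinSuccAbove (fun _ : Fin (m+1) => ℝ) 0).symm.trans
      (MeasurableEquiv.toLp 2 (Fin (m+1) → ℝ)))

lemma eqv_mp (m : ℕ) : MeasurePreserving (eqv m) := by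
  unfold eqv
  refine MeasurePreserving.trans (μb := volume) ?_ (MeasurePreserving.trans (μb := volume) ?_ ?_)
  · exact (MeasurePreserving.id volume).prod
      (EuclideanSpace.volume_preserving_symm_measurableEquiv_toLp (Fin m))
  · exact (volume_preserving_piFinSuccAbove (fun _ : Fin (m+1) => ℝ) 0).symm
  · exact PiLp.volume_preserving_toLp (Fin (m+1))

@[simp] lemma eqv_zero (m : ℕ) (t : ℝ) (z : EuclideanSpace ℝ (Fin m)) : eqv m (t, z) 0 = t := rfl

@[simp] lemma eqv_succ (m : ℕ) (t : ℝ) (z : EuclideanSpace ℝ (Fin m)) (j : Fin m) :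
    eqv m (t, z) j.succ = z j := rfl

lemma eqv_add (m : ℕ) (t t' : ℝ) (z z' : EuclideanSpace ℝ (Fin m)) :
    eqv m (t, z) + eqv m (t', z') = eqv m (t+t', z+z') := by
  ext j; refine Fin.cases ?_ (fun j => ?_) j <;> simp

lemma eqv_sub (m : ℕ) (t t' : ℝ) (z z' : EuclideanSpace ℝ (Fin m)) :
    eqv m (t, z) - eqv m (t', z') = eqv m (t-t', z-z') := by
  ext j; refine Fin.cases ?_ (fun j => ?_) j <;> simp

lemma eqv_single (m : ℕ) (t : ℝ) :
    EuclideanSpace.single (0 : Fin (m+1)) t = eqv m (t, 0) := by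
  ext j; refine Fin.cases ?_ (fun j => ?_) j <;> simp

lemma eqv_norm (m : ℕ) (z : EuclideanSpace ℝ (Fin m)) : ‖eqv m (0, z)‖ = ‖z‖ := by
  rw [EuclideanSpace.norm_eq, EuclideanSpace.norm_eq, Fin.sum_univ_succ]
  simp

lemma eqv_sum (m : ℕ) (t : ℝ) (z : EuclideanSpace ℝ (Fin m)) :
    ∑ j ∈ Finset.univ.erase (0 : Fin (m+1)), (eqv m (t, z) j) ^ 2 = ‖z‖ ^ 2 := by
  rw [Finset.sum_erase_eq_sub (Finset.mem_univ _), Fin.sum_univ_succ, EuclideanSpace.real_norm_sq_eq]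
  simp

lemma delta_bound (m : ℕ) (L C : ℝ) (u : EuclideanSpace ℝ (Fin (m+1)) → ℝ)
    (hLip : ∀ a b, |u a - u b| ≤ L * ‖a - b‖)
    (hSC : ∀ a b, delta2 u a b ≤ C * ‖b‖ ^ 2) (t : ℝ) (z : EuclideanSpace ℝ (Fin m)) :
    (u (eqv m (t, z)) - u (eqv m (t, 0))) + (u (eqv m (t, -z)) - u (eqv m (t, 0))) ≤
      2 * hfun L C ‖z‖ := by
  have h1 := hSC (eqv m (t, 0)) (eqv m (0, z))
  rw [delta2, eqv_add, eqv_sub, eqv_norm] at h1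
  simp only [add_zero, zero_add, sub_zero, zero_sub] at h1
  have h2 := (le_abs_self _).trans (hLip (eqv m (t, z)) (eqv m (t, 0)))
  have h3 := (le_abs_self _).trans (hLip (eqv m (t, -z)) (eqv m (t, 0)))
  rw [eqv_sub] at h2 h3
  simp only [sub_self, sub_zero, eqv_norm, norm_neg] at h2 h3
  unfold hfun
  rw [mul_min_of_nonneg _ _ (by norm_num)]
  refine le_min ?_ ?_ <;> linarith

lemma main_bound (m : ℕ) (hm : 1 ≤ m) (p a b s L C : ℝ) (hp : p = ((m:ℝ) + 1 + 2*s)/2)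
    (ha : 0 < a) (hb : 0 < b)
    (hs : 1/2 < s) (hs1 : s < 1) (hL : 0 < L) (hC : 0 < C)
    (u : EuclideanSpace ℝ (Fin (m+1)) → ℝ)
    (hLip : ∀ a b, |u a - u b| ≤ L * ‖a - b‖)
    (hSC : ∀ a b, delta2 u a b ≤ C * ‖b‖ ^ 2)
    (hint : Integrable (fun y : EuclideanSpace ℝ (Fin (m+1)) =>
      (u y - u (EuclideanSpace.single 0 (y 0))) /
        (a * y 0 ^ 2 + b * ∑ j ∈ Finset.univ.erase 0, y j ^ 2) ^ p)) :
    (1 - s) * (∫ y : EuclideanSpace ℝ (Fin (m+1)),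
      (u y - u (EuclideanSpace.single 0 (y 0))) /
        (a * y 0 ^ 2 + b * ∑ j ∈ Finset.univ.erase 0, y j ^ 2) ^ p) ≤
     (b ^ (1/2-p) / a ^ (1/2:ℝ) *
      (Real.sqrt Real.pi * Real.Gamma (p - 1/2) / Real.Gamma p)) *
      (surfOmega m * mu1 s L C / 2) := by
  obtain ⟨g1, g2⟩ := gK_all m hm p a b s L C hp ha hb hs hs1 hL hC
  set F : EuclideanSpace ℝ (Fin (m+1)) → ℝ := fun y =>
      (u y - u (EuclideanSpace.single 0 (y 0))) /
        (a * y 0 ^ 2 + b * ∑ j ∈ Finset.univ.erase 0, y j ^ 2) ^ p with hF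
  have hFE : ∀ t z, F (eqv m (t, z)) = (u (eqv m (t, z)) - u (eqv m (t, 0))) /
      (a * t ^ 2 + b * ‖z‖ ^ 2) ^ p := by
    intro t z
    simp only [hF, eqv_sum, eqv_zero, eqv_single]
  have i1 : Integrable (fun q => F (eqv m q)) :=
    ((eqv_mp m).integrable_comp_emb (eqv m).measurableEmbedding).2 hint
  let N : ℝ × EuclideanSpace ℝ (Fin m) ≃ᵐ ℝ × EuclideanSpace ℝ (Fin m) :=
    MeasurableEquiv.prodCongr (MeasurableEquiv.refl ℝ) (MeasurableEquiv.neg _)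
  have hN : MeasurePreserving N :=
    (MeasurePreserving.id volume).prod (Measure.measurePreserving_neg volume)
  have i2 : Integrable (fun q => F (eqv m (N q))) :=
    (hN.integrable_comp_emb N.measurableEmbedding).2 i1
  have v1 : ∫ q, F (eqv m q) = ∫ y, F y := (eqv_mp m).integral_comp (eqv m).measurableEmbedding F
  have v2 : ∫ q, F (eqv m (N q)) = ∫ y, F y := by
    rw [← v1]; exact hN.integral_comp N.measurableEmbedding (fun q => F (eqv m q))
  have hle : ∫ q, (F (eqv m q) + F (eqv m (N q))) ≤ ∫ q, 2 * gK m p a b L C q := by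
    refine integral_mono (i1.add i2) (g1.const_mul 2) ?_
    rintro ⟨t, z⟩
    have hNz : N (t, z) = (t, -z) := rfl
    simp only [hNz, hFE, gK, norm_neg]
    rw [← add_div, ← mul_div_assoc]
    exact div_le_div_of_nonneg_right (delta_bound m L C u hLip hSC t z) (by positivity)
  rw [integral_add i1 i2, v1, v2, integral_const_mul] at hle
  rw [← g2]
  exact mul_le_mul_of_nonneg_left (by linarith) (by linarith)



theorem stmt3 (n : ℕ) (hn : 2 ≤ n) (s ε L C : ℝ)
    (hs : 1 / 2 < s) (hs1 : s < 1) (hε : 0 < ε) (hL : 0 < L) (hC : 0 < C)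
    (u : EuclideanSpace ℝ (Fin n) → ℝ)
    (hLip : ∀ a b : EuclideanSpace ℝ (Fin n), |u a - u b| ≤ L * ‖a - b‖)
    (hSC : ∀ a b : EuclideanSpace ℝ (Fin n), delta2 u a b ≤ C * ‖b‖ ^ 2)
    (hint : Integrable (fun y : EuclideanSpace ℝ (Fin n) =>
      (u y - u (EuclideanSpace.single (⟨0, by omega⟩ : Fin n) (y ⟨0, by omega⟩))) /
        (ε ^ 2 * y (⟨0, by omega⟩ : Fin n) ^ 2 +
          ε ^ (-2 / ((n : ℝ) - 1)) * ∑ j ∈ Finset.univ.erase (⟨0, by omega⟩ : Fin n), y j ^ 2) ^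
          (((n : ℝ) + 2 * s) / 2))) :
    (1 - s) * (∫ y : EuclideanSpace ℝ (Fin n),
      (u y - u (EuclideanSpace.single (⟨0, by omega⟩ : Fin n) (y ⟨0, by omega⟩))) /
        (ε ^ 2 * y (⟨0, by omega⟩ : Fin n) ^ 2 +
          ε ^ (-2 / ((n : ℝ) - 1)) * ∑ j ∈ Finset.univ.erase (⟨0, by omega⟩ : Fin n), y j ^ 2) ^
          (((n : ℝ) + 2 * s) / 2)) ≤ C1 n s L C * ε ^ (2 * s / ((n : ℝ) - 1)) := by
  obtain ⟨m, rfl⟩ : ∃ m, n = m + 1 := ⟨n - 1, by omega⟩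
  have hm : 1 ≤ m := by omega
  have hm' : (0:ℝ) < m := by exact_mod_cast hm
  have key := main_bound m hm (((((m + 1 : ℕ) : ℝ)) + 2 * s) / 2) (ε ^ 2)
    (ε ^ (-2 / (((m + 1 : ℕ) : ℝ) - 1))) s L C (by push_cast; ring) (by positivity)
    (by positivity) hs hs1 hL hC u hLip hSC hint
  refine key.trans (le_of_eq ?_)
  have e1 : (ε ^ (-2 / (((m + 1 : ℕ) : ℝ) - 1))) ^ (1/2 - ((((m + 1 : ℕ) : ℝ)) + 2 * s) / 2) /
      (ε ^ 2) ^ (1/2:ℝ) = ε ^ (2 * s / (((m + 1 : ℕ) : ℝ) - 1)) := by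
    rw [← Real.rpow_natCast ε 2, ← Real.rpow_mul hε.le, ← Real.rpow_mul hε.le, ← Real.rpow_sub hε]
    congr 1
    push_cast
    rw [add_sub_cancel_right]
    field_simp
    ring
  rw [e1, C1, Nat.add_sub_cancel]
  rw [show ((((m + 1 : ℕ) : ℝ)) + 2 * s) / 2 - 1/2 = (((m + 1 : ℕ) : ℝ) - 1) / 2 + s by ring,
    show ((((m + 1 : ℕ) : ℝ)) + 2 * s) / 2 = ((m + 1 : ℕ) : ℝ) / 2 + s by ring]
  ring
end

section
/- Let n ≥ 2, 0 < s < 1, ε > 0, and let v : ℝ → ℝ be measurable with t ↦ v(t)/|t|^{1+2s} Lebesgue integrable on ℝ. Write points of ℝⁿ as (y₁, ȳ) with y₁ ∈ ℝ, ȳ ∈ ℝ^{n−1}. Then the function y ↦ v(y₁)/(ε² y₁² + ε^{−2/(n−1)} |ȳ|²)^{(n+2s)/2} is Lebesgue integrable on ℝⁿ and ∫_{ℝⁿ} v(y₁)/(ε² y₁² + ε^{−2/(n−1)} |ȳ|²)^{(n+2s)/2} dy = C₂·ε^{−2s}·∫_ℝ v(y₁)/|y₁|^{1+2s} dy₁,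 where C₂ = ω_{n−1}·Γ((n−1)/2)·Γ(s + 1/2)/(2·Γ(n/2 + s)). -/
open MeasureTheory

lemma aux_gamma {p r : ℝ} (hp : 0 < p) (hr : 0 < r) :
    ∫⁻ x in Set.Ioi (0:ℝ), ENNReal.ofReal (x ^ (p - 1) * Real.exp (-(r * x))) =
      ENNReal.ofReal ((1 / r) ^ p * Real.Gamma p) := by
  have h := Real.integral_rpow_mul_exp_neg_mul_Ioi hp hr
  rw [← h, ofReal_integral_eq_lintegral_ofReal]
  · apply Integrable.of_integral_ne_zero
    rw [h]
    have := Real.Gamma_pos_of_pos hp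
    positivity
  · filter_upwards [self_mem_ae_restrict measurableSet_Ioi] with x hx
    have : (0:ℝ) < x := hx
    simp only [Pi.zero_apply]
    positivity

lemma aux_gauss (m : ℕ) {c : ℝ} (hc : 0 < c) :
    ∫⁻ z : Fin m → ℝ, ENNReal.ofReal (Real.exp (-(c * ∑ j, z j ^ 2))) =
      ENNReal.ofReal ((Real.pi / c) ^ ((m : ℝ) / 2)) := by
  have h : ∫ z : Fin m → ℝ, Real.exp (-(c * ∑ j, z j ^ 2)) = (Real.pi / c) ^ ((m : ℝ) / 2) := by
    have h1 := integral_fintype_prod_volume_eq_pow (ι := Fin m) (fun x : ℝ => Real.exp (-c * x ^ 2))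
    rw [integral_gaussian] at h1
    simp_rw [← Real.exp_sum, ← Finset.mul_sum] at h1
    simp_rw [← neg_mul]
    rw [h1, Fintype.card_fin, Real.sqrt_eq_rpow, ← Real.rpow_natCast, ← Real.rpow_mul (by positivity)]
    congr 1
    ring
  rw [← h, ofReal_integral_eq_lintegral_ofReal]
  · apply Integrable.of_integral_ne_zero
    rw [h]
    positivity
  · exact Filter.Eventually.of_forall fun z => by simp only [Pi.zero_apply]; positivity

lemma aux_key (m : ℕ) {a b p : ℝ} (ha : 0 < a) (hb : 0 < b) (hp : (m : ℝ) / 2 < p) :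
    ∫⁻ z : Fin m → ℝ, ENNReal.ofReal (1 / (a + b * ∑ j, z j ^ 2) ^ p) =
      ENNReal.ofReal (Real.pi ^ ((m : ℝ) / 2) * Real.Gamma (p - m / 2) / Real.Gamma p *
        a ^ ((m : ℝ) / 2 - p) * b ^ (-((m : ℝ) / 2))) := by
  have hp0 : 0 < p := lt_of_le_of_lt (by positivity) hp
  have hG := Real.Gamma_pos_of_pos hp0
  have hG2 := Real.Gamma_pos_of_pos (sub_pos.2 hp)
  have hq : ∀ z : Fin m → ℝ, 0 < a + b * ∑ j, z j ^ 2 := fun z => by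
    have : 0 ≤ ∑ j, z j ^ 2 := Finset.sum_nonneg fun j _ => sq_nonneg _
    positivity
  have e1 : ∀ z : Fin m → ℝ, ENNReal.ofReal (1 / (a + b * ∑ j, z j ^ 2) ^ p) =
      ENNReal.ofReal (1 / Real.Gamma p) * ∫⁻ x in Set.Ioi (0:ℝ),
        ENNReal.ofReal (x ^ (p - 1) * Real.exp (-((a + b * ∑ j, z j ^ 2) * x))) := fun z => by
    rw [aux_gamma hp0 (hq z), ← ENNReal.ofReal_mul (by positivity)]
    congr 1
    rw [Real.div_rpow zero_le_one (hq z).le, Real.one_rpow]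
    field_simp
  simp_rw [e1]
  rw [lintegral_const_mul' _ _ ENNReal.ofReal_ne_top, lintegral_lintegral_swap]
  · have e2 : ∀ x ∈ Set.Ioi (0:ℝ), ∫⁻ z : Fin m → ℝ,
        ENNReal.ofReal (x ^ (p - 1) * Real.exp (-((a + b * ∑ j, z j ^ 2) * x))) =
        ENNReal.ofReal ((Real.pi / b) ^ ((m : ℝ) / 2)) *
          ENNReal.ofReal (x ^ (p - m / 2 - 1) * Real.exp (-(a * x))) := fun x hx => by
      have hx : 0 < x := hx
      have e3 : ∀ z : Fin m → ℝ,
          ENNReal.ofReal (x ^ (p - 1) * Real.exp (-((a + b * ∑ j, z j ^ 2) * x))) =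
          ENNReal.ofReal (x ^ (p - 1) * Real.exp (-(a * x))) *
            ENNReal.ofReal (Real.exp (-((b * x) * ∑ j, z j ^ 2))) := fun z => by
        rw [← ENNReal.ofReal_mul (by positivity), mul_assoc, ← Real.exp_add]
        congr 3
        ring
      simp_rw [e3]
      rw [lintegral_const_mul' _ _ ENNReal.ofReal_ne_top, aux_gauss m (by positivity : 0 < b * x),
        ← ENNReal.ofReal_mul (by positivity), ← ENNReal.ofReal_mul (by positivity)]
      congr 1
      rw [show p - m / 2 - 1 = (p - 1) - m / 2 by ring, Real.rpow_sub hx (p - 1) (m / 2), ← div_div,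
        Real.div_rpow (by positivity) hx.le]
      ring
    rw [setLIntegral_congr_fun measurableSet_Ioi e2,
      lintegral_const_mul' _ _ ENNReal.ofReal_ne_top, aux_gamma (sub_pos.2 hp) ha,
      ← ENNReal.ofReal_mul (by positivity), ← ENNReal.ofReal_mul (by positivity)]
    congr 1
    rw [Real.div_rpow (by positivity) hb.le, Real.div_rpow zero_le_one ha.le, Real.one_rpow,
      Real.rpow_neg hb.le, show (m : ℝ) / 2 - p = -(p - m / 2) by ring, Real.rpow_neg ha.le]
    field_simp
  · apply Measurable.aemeasurable
    unfold Function.uncurry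
    fun_prop

lemma aux_key_int (m : ℕ) {a b p : ℝ} (ha : 0 < a) (hb : 0 < b) (hp : (m : ℝ) / 2 < p) :
    Integrable (fun z : Fin m → ℝ => 1 / (a + b * ∑ j, z j ^ 2) ^ p) ∧
    ∫ z : Fin m → ℝ, 1 / (a + b * ∑ j, z j ^ 2) ^ p =
      Real.pi ^ ((m : ℝ) / 2) * Real.Gamma (p - m / 2) / Real.Gamma p *
        a ^ ((m : ℝ) / 2 - p) * b ^ (-((m : ℝ) / 2)) := by
  have hp0 : 0 < p := lt_of_le_of_lt (by positivity) hp
  have hG := Real.Gamma_pos_of_pos hp0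
  have hG2 := Real.Gamma_pos_of_pos (sub_pos.2 hp)
  have hq : ∀ z : Fin m → ℝ, 0 ≤ 1 / (a + b * ∑ j, z j ^ 2) ^ p := fun z => by
    have : 0 ≤ ∑ j, z j ^ 2 := Finset.sum_nonneg fun j _ => sq_nonneg _
    positivity
  have hm : Measurable (fun z : Fin m → ℝ => 1 / (a + b * ∑ j, z j ^ 2) ^ p) := by fun_prop
  have h := aux_key m ha hb hp
  constructor
  · refine ⟨hm.aestronglyMeasurable, ?_⟩
    rw [hasFiniteIntegral_iff_ofReal (Filter.Eventually.of_forall hq), h]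
    exact ENNReal.ofReal_lt_top
  · rw [integral_eq_lintegral_of_nonneg_ae (Filter.Eventually.of_forall hq)
      hm.aestronglyMeasurable, h, ENNReal.toReal_ofReal (by positivity)]

lemma aux_prod (m : ℕ) (hm : 1 ≤ m) (s ε : ℝ) (hs0 : 0 < s) (hε : 0 < ε)
    (v : ℝ → ℝ) (hmeas : Measurable v)
    (hint : Integrable (fun t : ℝ => v t / |t| ^ (1 + 2 * s))) :
    Integrable (fun y : ℝ × (Fin m → ℝ) => v y.1 / (ε ^ 2 * y.1 ^ 2 +
      ε ^ (-2 / (m : ℝ)) * ∑ j, y.2 j ^ 2) ^ (((m : ℝ) + 1 + 2 * s) / 2)) ∧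
    (∫ y : ℝ × (Fin m → ℝ), v y.1 / (ε ^ 2 * y.1 ^ 2 +
      ε ^ (-2 / (m : ℝ)) * ∑ j, y.2 j ^ 2) ^ (((m : ℝ) + 1 + 2 * s) / 2)) =
      C2 (m + 1) s * ε ^ (-(2 * s)) * ∫ t : ℝ, v t / |t| ^ (1 + 2 * s) := by
  have hm0 : (0:ℝ) < m := by exact_mod_cast hm
  set p : ℝ := ((m : ℝ) + 1 + 2 * s) / 2 with hp
  set b : ℝ := ε ^ (-2 / (m : ℝ)) with hb
  have hb0 : 0 < b := by positivity
  have hpm : (m : ℝ) / 2 < p := by rw [hp]; linarith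
  have hG := Real.Gamma_pos_of_pos (by positivity : 0 < p)
  have hC : C2 (m + 1) s = Real.pi ^ ((m : ℝ) / 2) * Real.Gamma (p - m / 2) / Real.Gamma p := by
    unfold C2 surfOmega
    have hG1 := Real.Gamma_pos_of_pos (by positivity : 0 < (m : ℝ) / 2)
    push_cast
    simp only [Nat.add_sub_cancel, add_sub_cancel_right]
    rw [show p - (m : ℝ) / 2 = s + 1 / 2 by rw [hp]; ring,
      show ((m : ℝ) + 1) / 2 + s = p by rw [hp]; ring]
    field_simp
  have hC0 : 0 ≤ C2 (m + 1) s := by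
    rw [hC]
    have hG2 := Real.Gamma_pos_of_pos (sub_pos.2 hpm)
    positivity
  have key : ∀ t : ℝ, t ≠ 0 →
      Integrable (fun z : Fin m → ℝ => 1 / (ε ^ 2 * t ^ 2 + b * ∑ j, z j ^ 2) ^ p) ∧
      ∫ z : Fin m → ℝ, 1 / (ε ^ 2 * t ^ 2 + b * ∑ j, z j ^ 2) ^ p =
        C2 (m + 1) s * ε ^ (-(2 * s)) * (1 / |t| ^ (1 + 2 * s)) := fun t ht => by
    obtain ⟨h1, h2⟩ := aux_key_int m (a := ε ^ 2 * t ^ 2) (by positivity) hb0 hpm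
    refine ⟨h1, ?_⟩
    have ht' : 0 < |t| := abs_pos.2 ht
    rw [h2, ← hC, mul_assoc, mul_assoc]
    congr 1
    rw [← sq_abs t, ← mul_pow, ← Real.rpow_natCast, ← Real.rpow_mul (by positivity),
      Real.mul_rpow hε.le ht'.le, hb, ← Real.rpow_mul hε.le, one_div, ← Real.rpow_neg ht'.le,
      mul_right_comm, ← Real.rpow_add hε]
    congr 2
    · rw [hp]; push_cast; field_simp; ring
    · rw [hp]; push_cast; ring
  have hne : ∀ᵐ t : ℝ, t ≠ 0 := by
    simp [ae_iff]
  have hmF : Measurable (fun y : ℝ × (Fin m → ℝ) => v y.1 / (ε ^ 2 * y.1 ^ 2 +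
      b * ∑ j, y.2 j ^ 2) ^ p) := by fun_prop
  have hI : Integrable (fun y : ℝ × (Fin m → ℝ) => v y.1 / (ε ^ 2 * y.1 ^ 2 +
      b * ∑ j, y.2 j ^ 2) ^ p) := by
    rw [Measure.volume_eq_prod, integrable_prod_iff hmF.aestronglyMeasurable]
    constructor
    · filter_upwards [hne] with t ht
      simpa [div_eq_mul_inv] using (key t ht).1.const_mul (v t)
    · refine (hint.norm.const_mul (C2 (m + 1) s * ε ^ (-(2 * s)))).congr ?_
      filter_upwards [hne] with t ht
      have : ∀ z : Fin m → ℝ, ‖v t / (ε ^ 2 * t ^ 2 + b * ∑ j, z j ^ 2) ^ p‖ =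
          |v t| * (1 / (ε ^ 2 * t ^ 2 + b * ∑ j, z j ^ 2) ^ p) := fun z => by
        have : 0 ≤ ∑ j, z j ^ 2 := Finset.sum_nonneg fun j _ => sq_nonneg _
        rw [norm_div, Real.norm_eq_abs, Real.norm_of_nonneg (by positivity), mul_one_div]
      simp_rw [this]
      rw [integral_const_mul, (key t ht).2, norm_div, Real.norm_eq_abs,
        Real.norm_of_nonneg (by positivity)]
      ring
  refine ⟨hI, ?_⟩
  rw [Measure.volume_eq_prod] at hI ⊢
  rw [integral_prod _ hI, ← integral_const_mul]
  apply integral_congr_ae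
  filter_upwards [hne] with t ht
  have : ∀ z : Fin m → ℝ, v t / (ε ^ 2 * t ^ 2 + b * ∑ j, z j ^ 2) ^ p =
      v t * (1 / (ε ^ 2 * t ^ 2 + b * ∑ j, z j ^ 2) ^ p) := fun z => by rw [mul_one_div]
  simp_rw [this]
  rw [integral_const_mul, (key t ht).2]
  ring

theorem stmt4 (n : ℕ) (hn : 2 ≤ n) (s ε : ℝ) (hs0 : 0 < s) (hs1 : s < 1) (hε : 0 < ε)
    (v : ℝ → ℝ) (hmeas : Measurable v)
    (hint : Integrable (fun t : ℝ => v t / |t| ^ (1 + 2 * s))) :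
    Integrable (fun y : EuclideanSpace ℝ (Fin n) =>
      v (y ⟨0, by omega⟩) /
        (ε ^ 2 * y (⟨0, by omega⟩ : Fin n) ^ 2 +
          ε ^ (-2 / ((n : ℝ) - 1)) * ∑ j ∈ Finset.univ.erase (⟨0, by omega⟩ : Fin n), y j ^ 2) ^
          (((n : ℝ) + 2 * s) / 2)) ∧
    (∫ y : EuclideanSpace ℝ (Fin n),
      v (y ⟨0, by omega⟩) /
        (ε ^ 2 * y (⟨0, by omega⟩ : Fin n) ^ 2 +
          ε ^ (-2 / ((n : ℝ) - 1)) * ∑ j ∈ Finset.univ.erase (⟨0, by omega⟩ : Fin n), y j ^ 2) ^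
          (((n : ℝ) + 2 * s) / 2)) =
      C2 n s * ε ^ (-(2 * s)) * ∫ t : ℝ, v t / |t| ^ (1 + 2 * s) := by
  obtain ⟨m, rfl⟩ : ∃ m, n = m + 1 := ⟨n - 1, by omega⟩
  obtain ⟨h1, h2⟩ := aux_prod m (by omega) s ε hs0 hε v hmeas hint
  let e : EuclideanSpace ℝ (Fin (m + 1)) ≃ᵐ ℝ × (Fin m → ℝ) :=
    (MeasurableEquiv.toLp 2 (Fin (m + 1) → ℝ)).symm.trans
      (MeasurableEquiv.piFinSuccAbove (fun _ => ℝ) 0)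
  have he : MeasurePreserving e :=
    (volume_preserving_piFinSuccAbove (fun _ : Fin (m + 1) => ℝ) 0).comp
      (PiLp.volume_preserving_ofLp (Fin (m + 1)))
  have hfun : (fun y : EuclideanSpace ℝ (Fin (m + 1)) =>
      v (y ⟨0, by omega⟩) /
        (ε ^ 2 * y (⟨0, by omega⟩ : Fin (m + 1)) ^ 2 +
          ε ^ (-2 / (((m + 1 : ℕ) : ℝ) - 1)) *
            ∑ j ∈ Finset.univ.erase (⟨0, by omega⟩ : Fin (m + 1)), y j ^ 2) ^
          ((((m + 1 : ℕ) : ℝ) + 2 * s) / 2)) =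
      (fun y : ℝ × (Fin m → ℝ) => v y.1 / (ε ^ 2 * y.1 ^ 2 +
      ε ^ (-2 / (m : ℝ)) * ∑ j, y.2 j ^ 2) ^ (((m : ℝ) + 1 + 2 * s) / 2)) ∘ e := by
    funext y
    have hs : ∑ j ∈ Finset.univ.erase (⟨0, by omega⟩ : Fin (m + 1)), y j ^ 2 =
        ∑ j : Fin m, y j.succ ^ 2 := by
      rw [Finset.sum_erase_eq_sub (Finset.mem_univ _), Fin.sum_univ_succ]
      exact add_sub_cancel_left _ _
    rw [hs]
    push_cast
    rw [add_sub_cancel_right]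
    rfl
  constructor
  · rw [hfun]
    exact (he.integrable_comp_emb e.measurableEmbedding).2 h1
  · rw [← h2]
    exact (congrArg (fun f => ∫ y, f y) hfun).trans
      (he.integral_comp e.measurableEmbedding (fun y : ℝ × (Fin m → ℝ) => v y.1 / (ε ^ 2 * y.1 ^ 2 +
      ε ^ (-2 / (m : ℝ)) * ∑ j, y.2 j ^ 2) ^ (((m : ℝ) + 1 + 2 * s) / 2)))
end

section
/- Let n ≥ 1 and let B be a real symmetric positive-semidefinite n×n matrix. Then the infimum of the set { trace(A·Aᵀ·B) : A a real n×n matrix with det A = 1 } equals n·(det B)^{1/n}. -/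
open Matrix

open scoped MatrixOrder in
theorem aux_sqrt {n : ℕ} (C : Matrix (Fin n) (Fin n) ℝ) (hC : C.PosDef) :
    ∃ S : Matrix (Fin n) (Fin n) ℝ, S.PosSemidef ∧ S * S = C :=
  ⟨CFC.sqrt C, (CFC.sqrt_nonneg C).posSemidef, CFC.sqrt_mul_sqrt_self C hC.posSemidef.nonneg⟩

theorem aux_exact {n : ℕ} (hn : 1 ≤ n) (C : Matrix (Fin n) (Fin n) ℝ) (hC : C.PosDef) :
    ∃ A : Matrix (Fin n) (Fin n) ℝ, A.det = 1 ∧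
      (A * Aᵀ * C).trace = n * C.det ^ ((1 : ℝ) / n) := by
  obtain ⟨S, hS, hSC⟩ := aux_sqrt C hC
  have hdet : S.det * S.det = C.det := by rw [← det_mul, hSC]
  have hpos := hC.det_pos
  have hS0 := hS.det_nonneg
  have hSp : 0 < S.det := by
    rcases hS0.lt_or_eq with h | h
    · exact h
    · rw [← h] at hdet; simp at hdet; linarith
  have hSu : IsUnit S.det := hSp.ne'.isUnit
  have hSt : Sᵀ = S := by simpa [conjTranspose_eq_transpose_of_trivial] using hS.isHermitian.eq
  refine ⟨(S.det ^ ((1 : ℝ) / n)) • S⁻¹, ?_, ?_⟩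
  · rw [det_smul, Fintype.card_fin, one_div, Real.rpow_inv_natCast_pow hS0 (by omega),
      det_nonsing_inv, Ring.mul_inverse_cancel _ hSu]
  · have h1 : S⁻¹ * S⁻¹ * C = 1 := by
      rw [← hSC, Matrix.mul_assoc, ← Matrix.mul_assoc S⁻¹ S S, nonsing_inv_mul _ hSu,
        Matrix.one_mul, nonsing_inv_mul _ hSu]
    rw [transpose_smul, transpose_nonsing_inv, hSt]
    simp only [Matrix.smul_mul, Matrix.mul_smul, trace_smul, h1, trace_one, Fintype.card_fin,
      smul_eq_mul]
    rw [← hdet, Real.mul_rpow hS0 hS0]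
    ring

theorem aux_amgm {n : ℕ} (hn : 1 ≤ n) (C : Matrix (Fin n) (Fin n) ℝ) (hC : C.PosSemidef) :
    n * C.det ^ ((1 : ℝ) / n) ≤ C.trace := by
  have hn' : (0 : ℝ) < n := by exact_mod_cast hn
  have h := Real.geom_mean_le_arith_mean Finset.univ (fun _ => 1) hC.1.eigenvalues
    (by simp) (by simpa using hn') (fun i _ => hC.eigenvalues_nonneg i)
  rw [hC.1.det_eq_prod_eigenvalues, hC.1.trace_eq_sum_eigenvalues]
  simp at h ⊢
  rw [le_div_iff₀ hn'] at h
  linarith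

theorem stmt8 (n : ℕ) (hn : 1 ≤ n) (B : Matrix (Fin n) (Fin n) ℝ) (hB : B.PosSemidef) :
    sInf {z : ℝ | ∃ A : Matrix (Fin n) (Fin n) ℝ, A.det = 1 ∧ z = (A * Aᵀ * B).trace} =
      n * B.det ^ ((1 : ℝ) / n) := by
  have hlow : ∀ z ∈ {z : ℝ | ∃ A : Matrix (Fin n) (Fin n) ℝ, A.det = 1 ∧
      z = (A * Aᵀ * B).trace}, n * B.det ^ ((1 : ℝ) / n) ≤ z := by
    rintro z ⟨A, hA, rfl⟩
    have h := aux_amgm hn (Aᵀ * B * A)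
      (by simpa [conjTranspose_eq_transpose_of_trivial] using hB.conjTranspose_mul_mul_same A)
    rw [det_mul, det_mul, det_transpose, hA, one_mul, mul_one] at h
    rwa [Matrix.mul_assoc, trace_mul_comm]
  apply le_antisymm
  · have hle : ∀ e : ℝ, 0 < e → sInf {z : ℝ | ∃ A : Matrix (Fin n) (Fin n) ℝ, A.det = 1 ∧
        z = (A * Aᵀ * B).trace} ≤ n * (B + e • (1 : Matrix (Fin n) (Fin n) ℝ)).det ^ ((1 : ℝ) / n) := by
      intro e he
      obtain ⟨A, hA, hA2⟩ := aux_exact hn (B + e • (1 : Matrix (Fin n) (Fin n) ℝ))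
        (PosDef.posSemidef_add hB (PosDef.one.smul he))
      refine (csInf_le ⟨_, hlow⟩ ⟨A, hA, rfl⟩).trans ?_
      rw [← hA2, Matrix.mul_add, trace_add]
      have : 0 ≤ (A * Aᵀ).trace := by
        simpa [conjTranspose_eq_transpose_of_trivial] using
          (posSemidef_self_mul_conjTranspose A).trace_nonneg
      simp only [Matrix.mul_smul, Matrix.mul_one, trace_smul, smul_eq_mul]
      nlinarith
    have hcont : Continuous fun e : ℝ =>
        n * (B + e • (1 : Matrix (Fin n) (Fin n) ℝ)).det ^ ((1 : ℝ) / n) := by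
      refine continuous_const.mul (Continuous.rpow_const ?_ (fun _ => Or.inr (by positivity)))
      exact Continuous.matrix_det (by fun_prop)
    have ht := (hcont.tendsto 0).mono_left (nhdsWithin_le_nhds (s := Set.Ioi 0))
    simp only [zero_smul, add_zero] at ht
    exact ge_of_tendsto ht (Filter.eventually_of_mem self_mem_nhdsWithin hle)
  · exact le_csInf ⟨_, 1, det_one, rfl⟩ hlow
end

section
/- Let n ≥ 1 and let u : ℝⁿ → ℝ be convex, twice continuously differentiable, and Lipschitz continuous. Fix x ∈ ℝⁿ. Then, as s → 1 from the left (with 1/2 < s < 1), (1−s)·D_s u(x) converges to (ω_n/(4n))·inf{ trace(A·Aᵀ·D²u(x)) : A symmetric positive definite, det A = 1 }, where D²u(x) is the Hessian matrix of u at x. -/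
open MeasureTheory

open Matrix Filter

/-- Hessian matrix of `u` at `x`, with entries the second partial derivatives. -/
noncomputable def hess {n : ℕ} (u : EuclideanSpace ℝ (Fin n) → ℝ)
    (x : EuclideanSpace ℝ (Fin n)) : Matrix (Fin n) (Fin n) ℝ :=
  Matrix.of fun i j =>
    fderiv ℝ (fun z => fderiv ℝ u z (EuclideanSpace.single j (1 : ℝ))) x
      (EuclideanSpace.single i (1 : ℝ))


lemma aux_surf (n : ℕ) (hn : 1 ≤ n) :
    (n : ℝ) * (volume : Measure (EuclideanSpace ℝ (Fin n))).real (Metric.ball 0 1) = surfOmega n := by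
  have : Nonempty (Fin n) := ⟨⟨0, hn⟩⟩
  have hn' : (0 : ℝ) < n := by exact_mod_cast hn
  have hG : 0 < Real.Gamma ((n : ℝ) / 2) := Real.Gamma_pos_of_pos (by positivity)
  rw [Measure.real, EuclideanSpace.volume_ball, surfOmega, Real.Gamma_add_one (by positivity)]
  simp only [ENNReal.ofReal_one, one_pow, one_mul, Fintype.card_fin]
  rw [ENNReal.toReal_ofReal (by positivity), Real.sqrt_eq_rpow, ← Real.rpow_natCast,
    ← Real.rpow_mul Real.pi_pos.le]
  have : (1 / 2 * (n : ℝ)) = n / 2 := by ring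
  rw [this]
  field_simp

noncomputable def G1 (n : ℕ) (s ρ : ℝ) (r : ℝ) : ℝ := if r < ρ then 1 / r ^ ((n : ℝ) + 2 * s) else 0
noncomputable def G2 (n : ℕ) (s ρ : ℝ) (r : ℝ) : ℝ := if r < ρ then 0 else 1 / r ^ ((n : ℝ) + 2 * s)

lemma aux_pow1 (n : ℕ) (hn : 1 ≤ n) (s : ℝ) (k : ℕ) (y : ℝ) (hy : 0 < y) :
    y ^ (n - 1) * (y ^ k * (1 / y ^ ((n : ℝ) + 2 * s))) = y ^ ((k : ℝ) - 1 - 2 * s) := by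
  rw [one_div, ← Real.rpow_neg hy.le, ← Real.rpow_natCast, ← Real.rpow_natCast, ← Real.rpow_add hy,
    ← Real.rpow_add hy]
  congr 1
  push_cast [hn]
  ring

lemma aux_G1 (n : ℕ) (hn : 1 ≤ n) (s ρ : ℝ) (hs : s < 1) (hρ : 0 < ρ) :
    Integrable (fun z : EuclideanSpace ℝ (Fin n) => ‖z‖ ^ 2 * G1 n s ρ ‖z‖) ∧
    ∫ z : EuclideanSpace ℝ (Fin n), ‖z‖ ^ 2 * G1 n s ρ ‖z‖ =
      surfOmega n * (ρ ^ (2 - 2 * s) / (2 - 2 * s)) := by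
  have : Nonempty (Fin n) := ⟨⟨0, hn⟩⟩
  have key : ∀ y ∈ Set.Ioi (0 : ℝ), y ^ (n - 1) • (y ^ 2 * G1 n s ρ y) =
      (Set.Ioo 0 ρ).indicator (fun y => y ^ (1 - 2 * s)) y := by
    intro y hy
    have hy' : 0 < y := hy
    by_cases h : y < ρ
    · rw [Set.indicator_of_mem (show y ∈ Set.Ioo 0 ρ from ⟨hy, h⟩), G1, if_pos h, smul_eq_mul,
        aux_pow1 n hn s 2 y hy]
      norm_num
    · rw [Set.indicator_of_notMem (fun hh => h hh.2), G1, if_neg h]; simp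
  constructor
  · rw [integrable_fun_norm_addHaar (μ := volume) (E := EuclideanSpace ℝ (Fin n))
      (f := fun r => r ^ 2 * G1 n s ρ r), finrank_euclideanSpace_fin,
      integrableOn_congr_fun key measurableSet_Ioi]
    refine Integrable.integrableOn ?_
    rw [integrable_indicator_iff measurableSet_Ioo,
      intervalIntegral.integrableOn_Ioo_rpow_iff hρ]
    linarith
  · rw [integral_fun_norm_addHaar (volume : Measure (EuclideanSpace ℝ (Fin n)))
      (fun r => r ^ 2 * G1 n s ρ r), finrank_euclideanSpace_fin,
      setIntegral_congr_fun measurableSet_Ioi key, setIntegral_indicator measurableSet_Ioo,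
      nsmul_eq_mul, smul_eq_mul, ← mul_assoc, aux_surf n hn]
    congr 1
    have : Set.Ioi (0 : ℝ) ∩ Set.Ioo 0 ρ = Set.Ioo 0 ρ := by
      ext t; simp
    rw [this, ← integral_Ioc_eq_integral_Ioo, ← intervalIntegral.integral_of_le hρ.le,
      integral_rpow (Or.inl (by linarith)), Real.zero_rpow (by linarith)]
    rw [sub_zero, show 1 - 2 * s + 1 = 2 - 2 * s by ring]

lemma aux_G2 (n : ℕ) (hn : 1 ≤ n) (s ρ : ℝ) (hs : 1 / 2 < s) (hρ : 0 < ρ) :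
    Integrable (fun z : EuclideanSpace ℝ (Fin n) => ‖z‖ * G2 n s ρ ‖z‖) ∧
    ∫ z : EuclideanSpace ℝ (Fin n), ‖z‖ * G2 n s ρ ‖z‖ =
      surfOmega n * (ρ ^ (1 - 2 * s) / (2 * s - 1)) := by
  have : Nonempty (Fin n) := ⟨⟨0, hn⟩⟩
  have key : ∀ y ∈ Set.Ioi (0 : ℝ), y ^ (n - 1) • (y * G2 n s ρ y) =
      (Set.Ici ρ).indicator (fun y => y ^ (- 2 * s)) y := by
    intro y hy
    have hy' : 0 < y := hy
    by_cases h : y < ρ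
    · rw [Set.indicator_of_notMem (by simpa using h), G2, if_pos h]; simp
    · rw [Set.indicator_of_mem (show y ∈ Set.Ici ρ by simpa using h), G2, if_neg h, smul_eq_mul]
      have := aux_pow1 n hn s 1 y hy
      rw [pow_one] at this
      rw [this]
      congr 1; push_cast; ring
  constructor
  · rw [integrable_fun_norm_addHaar (μ := volume) (E := EuclideanSpace ℝ (Fin n))
      (f := fun r => r * G2 n s ρ r), finrank_euclideanSpace_fin,
      integrableOn_congr_fun key measurableSet_Ioi]
    refine Integrable.integrableOn ?_
    rw [integrable_indicator_iff measurableSet_Ici, integrableOn_Ici_iff_integrableOn_Ioi]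
    exact integrableOn_Ioi_rpow_of_lt (by linarith) hρ
  · rw [integral_fun_norm_addHaar (volume : Measure (EuclideanSpace ℝ (Fin n)))
      (fun r => r * G2 n s ρ r), finrank_euclideanSpace_fin,
      setIntegral_congr_fun measurableSet_Ioi key, setIntegral_indicator measurableSet_Ici,
      nsmul_eq_mul, smul_eq_mul, ← mul_assoc, aux_surf n hn]
    congr 1
    have : Set.Ioi (0 : ℝ) ∩ Set.Ici ρ = Set.Ici ρ := by
      ext t; simp; intro h; linarith
    rw [this, integral_Ici_eq_integral_Ioi, integral_Ioi_rpow_of_lt (by linarith) hρ,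
      neg_div, ← div_neg]
    congr 2 <;> ring

/-- second moments of a radial weight -/
lemma aux_moment (n : ℕ) (hn : 1 ≤ n) (w : ℝ → ℝ) (hw : Measurable w)
    (hi : Integrable (fun z : EuclideanSpace ℝ (Fin n) => ‖z‖ ^ 2 * w ‖z‖)) (i j : Fin n) :
    Integrable (fun z : EuclideanSpace ℝ (Fin n) => z i * z j * w ‖z‖) ∧
    ∫ z : EuclideanSpace ℝ (Fin n), z i * z j * w ‖z‖ =
      if i = j then (∫ z : EuclideanSpace ℝ (Fin n), ‖z‖ ^ 2 * w ‖z‖) / n else 0 := by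
  have hint : ∀ i j, Integrable (fun z : EuclideanSpace ℝ (Fin n) => z i * z j * w ‖z‖) := by
    intro i j
    refine hi.mono (by fun_prop) ?_
    refine Eventually.of_forall fun z => ?_
    rw [norm_mul, norm_mul, norm_mul, norm_pow, norm_norm, pow_two]
    gcongr
    · exact PiLp.norm_apply_le z i
    · exact PiLp.norm_apply_le z j
  refine ⟨hint i j, ?_⟩
  split_ifs with hij
  · subst hij
    have heq : ∀ j, ∫ z : EuclideanSpace ℝ (Fin n), z j * z j * w ‖z‖ =
        ∫ z : EuclideanSpace ℝ (Fin n), z i * z i * w ‖z‖ := by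
      intro j
      let e := LinearIsometryEquiv.piLpCongrLeft 2 ℝ ℝ (Equiv.swap i j)
      rw [← (e.measurePreserving).integral_comp e.toHomeomorph.measurableEmbedding]
      refine integral_congr_ae (Eventually.of_forall fun z => ?_)
      have : e z j = z i := by
        simp [e, LinearIsometryEquiv.piLpCongrLeft_apply]
      simp only [LinearIsometryEquiv.norm_map, this]
    have hsum : ∫ z : EuclideanSpace ℝ (Fin n), ‖z‖ ^ 2 * w ‖z‖ =
        ∑ j : Fin n, ∫ z : EuclideanSpace ℝ (Fin n), z j * z j * w ‖z‖ := by
      rw [← integral_finsetSum _ (fun j _ => hint j j)]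
      refine integral_congr_ae (Eventually.of_forall fun z => ?_)
      simp only [EuclideanSpace.real_norm_sq_eq, Finset.sum_mul]
      refine Finset.sum_congr rfl fun k _ => by ring
    rw [hsum, Finset.sum_congr rfl (fun j _ => heq j)]
    have : (n : ℝ) ≠ 0 := by positivity
    simp
    field_simp
  · let e : EuclideanSpace ℝ (Fin n) ≃ₗᵢ[ℝ] EuclideanSpace ℝ (Fin n) :=
      LinearIsometryEquiv.piLpCongrRight 2
        (fun k : Fin n => if k = i then LinearIsometryEquiv.neg ℝ else LinearIsometryEquiv.refl ℝ ℝ)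
    have h := (e.measurePreserving).integral_comp e.toHomeomorph.measurableEmbedding
      (fun z : EuclideanSpace ℝ (Fin n) => z i * z j * w ‖z‖)
    have h2 : ∀ z : EuclideanSpace ℝ (Fin n),
      e z i * e z j * w ‖e z‖ = - (z i * z j * w ‖z‖) := by
      intro z
      have h1 : e z i = - z i := by simp [e]
      have h2 : e z j = z j := by simp [e, Ne.symm hij]
      rw [h1, h2, LinearIsometryEquiv.norm_map]; ring
    simp only [h2, integral_neg] at h
    linarith

lemma aux_G1_meas (n : ℕ) (s ρ : ℝ) : Measurable (G1 n s ρ) := by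
  unfold G1
  exact Measurable.ite measurableSet_Iio (by fun_prop) (by fun_prop)

/-- bilinear version -/
lemma aux_quad (n : ℕ) (hn : 1 ≤ n) (s ρ : ℝ) (hs : s < 1) (hρ : 0 < ρ)
    (b : EuclideanSpace ℝ (Fin n) →ₗ[ℝ] EuclideanSpace ℝ (Fin n) →ₗ[ℝ] ℝ) :
    Integrable (fun z : EuclideanSpace ℝ (Fin n) => b z z * G1 n s ρ ‖z‖) ∧
    ∫ z : EuclideanSpace ℝ (Fin n), b z z * G1 n s ρ ‖z‖ =
      (∑ k, b (EuclideanSpace.single k 1) (EuclideanSpace.single k 1)) / n *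
      (surfOmega n * (ρ ^ (2 - 2 * s) / (2 - 2 * s))) := by
  obtain ⟨h1, h2⟩ := aux_G1 n hn s ρ hs hρ
  have hM := aux_moment n hn (G1 n s ρ) (aux_G1_meas n s ρ) h1
  have hz : ∀ z : EuclideanSpace ℝ (Fin n), z = ∑ k, z k • EuclideanSpace.single k (1 : ℝ) := by
    intro z
    ext i
    simp [Finset.sum_apply, Pi.single_apply]
  have hexp : ∀ z : EuclideanSpace ℝ (Fin n), b z z * G1 n s ρ ‖z‖ =
      ∑ i, ∑ j, b (EuclideanSpace.single i 1) (EuclideanSpace.single j 1) *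
        (z i * z j * G1 n s ρ ‖z‖) := by
    intro z
    have : b z z = ∑ i, ∑ j, z i * (z j * b (EuclideanSpace.single i 1) (EuclideanSpace.single j 1)) := by
      conv_lhs => rw [hz z]
      simp [Finset.mul_sum]
      rw [Finset.sum_comm]
      refine Finset.sum_congr rfl fun i _ => Finset.sum_congr rfl fun j _ => by ring
    rw [this, Finset.sum_mul]
    refine Finset.sum_congr rfl fun i _ => ?_
    rw [Finset.sum_mul]
    refine Finset.sum_congr rfl fun j _ => by ring
  simp only [hexp]
  refine ⟨integrable_finsetSum _ fun i _ => integrable_finsetSum _ fun j _ =>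
    ((hM i j).1.const_mul _), ?_⟩
  rw [integral_finsetSum _ fun i _ => integrable_finsetSum _ fun j _ => ((hM i j).1.const_mul _)]
  rw [Finset.sum_div, Finset.sum_mul]
  refine Finset.sum_congr rfl fun i _ => ?_
  rw [integral_finsetSum _ fun j _ => ((hM i j).1.const_mul _)]
  simp only [integral_const_mul, (hM i _).2, h2]
  simp
  ring

lemma aux_taylor {n : ℕ} (u : EuclideanSpace ℝ (Fin n) → ℝ) (hC2 : ContDiff ℝ 2 u)
    (x : EuclideanSpace ℝ (Fin n)) (ε : ℝ) (hε : 0 < ε) :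
    ∃ r > 0, ∀ y, ‖y‖ < r →
      |delta2 u x y - fderiv ℝ (fderiv ℝ u) x y y| ≤ ε * ‖y‖ ^ 2 := by
  have hu : Differentiable ℝ u := hC2.differentiable (by norm_num)
  have hf : Differentiable ℝ (fderiv ℝ u) :=
    (hC2.fderiv_right (m := 1) (by norm_num)).differentiable (by norm_num)
  set D := fderiv ℝ (fderiv ℝ u) x with hD
  have h1 := (hasFDerivAt_iff_isLittleO_nhds_zero.1 (hf x).hasFDerivAt).def (half_pos hε)
  obtain ⟨r, hr, h⟩ := Metric.eventually_nhds_iff.1 h1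
  refine ⟨r, hr, fun y hy => ?_⟩
  have hb : ∀ h : EuclideanSpace ℝ (Fin n), ‖h‖ < r →
      ‖fderiv ℝ u (x + h) - fderiv ℝ u x - D h‖ ≤ ε / 2 * ‖h‖ := by
    intro k hk
    exact h (by simpa using hk)
  let φ : ℝ → ℝ := fun t => u (x + t • y) + u (x - t • y) - t ^ 2 * D y y
  let φ' : ℝ → ℝ := fun t => fderiv ℝ u (x + t • y) y + fderiv ℝ u (x - t • y) (-y)
    - 2 * t * D y y
  have hd : ∀ t, HasDerivAt φ (φ' t) t := by
    intro t
    have e1 : HasDerivAt (fun t : ℝ => x + t • y) y t := by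
      simpa using ((hasDerivAt_id t).smul_const y).const_add x
    have e2 : HasDerivAt (fun t : ℝ => x - t • y) (-y) t := by
      simpa using ((hasDerivAt_id t).smul_const y).const_sub x
    have e3 : HasDerivAt (fun t : ℝ => t ^ 2 * D y y) (2 * t * D y y) t := by
      simpa using (hasDerivAt_pow 2 t).mul_const (D y y)
    exact (((hu _).hasFDerivAt.comp_hasDerivAt t e1).add
      ((hu _).hasFDerivAt.comp_hasDerivAt t e2)).sub e3
  have := norm_image_sub_le_of_norm_deriv_le_segment_01' (f := φ) (f' := φ') (C := ε * ‖y‖ ^ 2)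
    (fun t _ => (hd t).hasDerivWithinAt) ?_
  · have e : φ 1 - φ 0 = delta2 u x y - D y y := by
      simp [φ, delta2]; ring
    rwa [e, Real.norm_eq_abs] at this
  · intro t ht
    have hty : ‖t • y‖ ≤ ‖y‖ := by
      rw [norm_smul, Real.norm_eq_abs, abs_of_nonneg ht.1]
      exact mul_le_of_le_one_left (norm_nonneg _) ht.2.le
    have b1 := hb (t • y) (hty.trans_lt hy)
    have b2 := hb (-(t • y)) (by rw [norm_neg]; exact hty.trans_lt hy)
    rw [norm_neg] at b2
    have e : φ' t = (fderiv ℝ u (x + t • y) - fderiv ℝ u x - D (t • y)) y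
        - (fderiv ℝ u (x + -(t • y)) - fderiv ℝ u x - D (-(t • y))) y := by
      simp [φ', sub_eq_add_neg]; ring
    rw [e]
    refine (norm_sub_le _ _).trans ?_
    have c1 := (fderiv ℝ u (x + t • y) - fderiv ℝ u x - D (t • y)).le_opNorm y
    have c2 := (fderiv ℝ u (x + -(t • y)) - fderiv ℝ u x - D (-(t • y))).le_opNorm y
    have hy0 := norm_nonneg y
    have d : ε / 2 * ‖t • y‖ ≤ ε / 2 * ‖y‖ := by gcongr
    have d1 := mul_le_mul_of_nonneg_right (b1.trans d) hy0
    have d2 := mul_le_mul_of_nonneg_right (b2.trans d) hy0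
    nlinarith

lemma aux_delta_nonneg {n : ℕ} (u : EuclideanSpace ℝ (Fin n) → ℝ)
    (hconv : ConvexOn ℝ Set.univ u) (x y : EuclideanSpace ℝ (Fin n)) : 0 ≤ delta2 u x y := by
  have h := hconv.2 (Set.mem_univ (x + y)) (Set.mem_univ (x - y))
    (show (0 : ℝ) ≤ 1 / 2 by norm_num) (show (0 : ℝ) ≤ 1 / 2 by norm_num) (by norm_num)
  have e : (1 / 2 : ℝ) • (x + y) + (1 / 2 : ℝ) • (x - y) = x := by module
  rw [e] at h
  simp only [smul_eq_mul] at h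
  unfold delta2; linarith

lemma aux_delta_le {n : ℕ} (u : EuclideanSpace ℝ (Fin n) → ℝ) (L : ℝ)
    (hLip : ∀ a b : EuclideanSpace ℝ (Fin n), |u a - u b| ≤ L * ‖a - b‖)
    (x y : EuclideanSpace ℝ (Fin n)) : delta2 u x y ≤ 2 * |L| * ‖y‖ := by
  have h1 := (le_abs_self _).trans (hLip (x + y) x)
  have h2 := (le_abs_self _).trans (hLip (x - y) x)
  have e1 : x + y - x = y := by abel
  have e2 : x - y - x = -y := by abel
  rw [e1] at h1
  rw [e2, norm_neg] at h2
  have := mul_le_mul_of_nonneg_right (le_abs_self L) (norm_nonneg y)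
  unfold delta2; linarith

lemma aux_psd {n : ℕ} (u : EuclideanSpace ℝ (Fin n) → ℝ) (hconv : ConvexOn ℝ Set.univ u)
    (hC2 : ContDiff ℝ 2 u) (x v : EuclideanSpace ℝ (Fin n)) :
    0 ≤ fderiv ℝ (fderiv ℝ u) x v v := by
  set D := fderiv ℝ (fderiv ℝ u) x with hD
  have key : ∀ ε > 0, 0 ≤ D v v + ε * ‖v‖ ^ 2 := by
    intro ε hε
    obtain ⟨r, hr, h⟩ := aux_taylor u hC2 x ε hε
    obtain ⟨t, ht, ht'⟩ : ∃ t : ℝ, 0 < t ∧ t * ‖v‖ < r := by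
      refine ⟨r / (‖v‖ + 1), by positivity, ?_⟩
      rw [div_mul_eq_mul_div, div_lt_iff₀ (by positivity)]
      nlinarith
    have hn : ‖t • v‖ = t * ‖v‖ := by rw [norm_smul, Real.norm_eq_abs, abs_of_pos ht]
    have h1 := h (t • v) (by rw [hn]; exact ht')
    have h2 := aux_delta_nonneg u hconv x (t • v)
    have h3 := (abs_le.1 h1).2
    rw [hn] at h3
    simp only [← hD, map_smul, _root_.smul_apply, smul_eq_mul] at h3
    have h4 : 0 ≤ t ^ 2 * (D v v + ε * ‖v‖ ^ 2) := by nlinarith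
    exact nonneg_of_mul_nonneg_right h4 (by positivity)
  by_contra hneg
  push Not at hneg
  have := key (- D v v / 2 / (‖v‖ ^ 2 + 1)) (by apply div_pos; linarith; positivity)
  have h5 : - D v v / 2 / (‖v‖ ^ 2 + 1) * ‖v‖ ^ 2 ≤ - D v v / 2 := by
    rw [div_mul_eq_mul_div, div_le_iff₀ (by positivity)]
    nlinarith
  linarith

lemma aux_LA {n : ℕ} (s : ℝ) (A : Matrix (Fin n) (Fin n) ℝ) (hA : A.det = 1)
    (u : EuclideanSpace ℝ (Fin n) → ℝ) (x : EuclideanSpace ℝ (Fin n)) :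
    LA s A u x = (1 / 2) * ∫ z, delta2 u x (Matrix.toEuclideanLin A z) / ‖z‖ ^ ((n : ℝ) + 2 * s) := by
  have hdet : LinearMap.det (Matrix.toEuclideanLin A) = 1 := by
    rw [← hA]; exact LinearMap.det_toLpLin 2 A
  have hm := Measure.map_linearMap_addHaar_eq_smul_addHaar
    (volume : Measure (EuclideanSpace ℝ (Fin n))) (f := Matrix.toEuclideanLin A) (by rw [hdet]; simp)
  rw [hdet] at hm
  simp only [inv_one, abs_one, ENNReal.ofReal_one, one_smul] at hm
  let T := (LinearEquiv.ofIsUnitDet (f := Matrix.toEuclideanLin A)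
    (v := (EuclideanSpace.basisFun (Fin n) ℝ).toBasis) (v' := (EuclideanSpace.basisFun (Fin n) ℝ).toBasis)
    (by rw [LinearMap.det_toMatrix, hdet]; exact isUnit_one)).toContinuousLinearEquiv
  have hT : ⇑T = Matrix.toEuclideanLin A := rfl
  have hme : MeasurableEmbedding (Matrix.toEuclideanLin A) := by
    rw [← hT]; exact T.toHomeomorph.measurableEmbedding
  unfold LA
  congr 1
  rw [← hm, hme.integral_map, hm]
  refine integral_congr_ae (Eventually.of_forall fun z => ?_)
  simp only [kernelA]
  congr 3
  have hu : IsUnit A.det := by rw [hA]; exact isUnit_one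
  ext i
  change (A⁻¹ *ᵥ (A *ᵥ z.ofLp)) i = z.ofLp i
  rw [Matrix.mulVec_mulVec, Matrix.nonsing_inv_mul A hu, Matrix.one_mulVec]

noncomputable def bT {n : ℕ} (D : EuclideanSpace ℝ (Fin n) →L[ℝ] EuclideanSpace ℝ (Fin n) →L[ℝ] ℝ)
    (T : EuclideanSpace ℝ (Fin n) →ₗ[ℝ] EuclideanSpace ℝ (Fin n)) :
    EuclideanSpace ℝ (Fin n) →ₗ[ℝ] EuclideanSpace ℝ (Fin n) →ₗ[ℝ] ℝ :=
  LinearMap.mk₂ ℝ (fun v w => D (T v) (T w)) (by simp) (by simp) (by simp) (by simp)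

noncomputable def qs {n : ℕ} (D : EuclideanSpace ℝ (Fin n) →L[ℝ] EuclideanSpace ℝ (Fin n) →L[ℝ] ℝ)
    (T : EuclideanSpace ℝ (Fin n) →ₗ[ℝ] EuclideanSpace ℝ (Fin n)) : ℝ :=
  ∑ k, D (T (EuclideanSpace.single k 1)) (T (EuclideanSpace.single k 1))

lemma aux_T_cont {n : ℕ} (T : EuclideanSpace ℝ (Fin n) →ₗ[ℝ] EuclideanSpace ℝ (Fin n)) :
    Continuous T := T.continuous_of_finiteDimensional

lemma aux_upper (n : ℕ) (hn : 1 ≤ n) (s : ℝ) (hs : 1 / 2 < s) (hs1 : s < 1)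
    (D : EuclideanSpace ℝ (Fin n) →L[ℝ] EuclideanSpace ℝ (Fin n) →L[ℝ] ℝ)
    (T : EuclideanSpace ℝ (Fin n) →ₗ[ℝ] EuclideanSpace ℝ (Fin n))
    (a r ε L : ℝ) (ha : 0 < a) (hr : 0 < r) (hε : 0 ≤ ε) (hL : 0 ≤ L)
    (hT : ∀ z, ‖T z‖ ≤ a * ‖z‖) (g : EuclideanSpace ℝ (Fin n) → ℝ) (hg : Continuous g)
    (hg0 : ∀ y, 0 ≤ g y) (hgL : ∀ y, g y ≤ 2 * L * ‖y‖)
    (hgD : ∀ y, ‖y‖ < r → g y ≤ D y y + ε * ‖y‖ ^ 2) :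
    Integrable (fun z => g (T z) / ‖z‖ ^ ((n : ℝ) + 2 * s)) ∧
    ∫ z, g (T z) / ‖z‖ ^ ((n : ℝ) + 2 * s) ≤
      (qs D T / n + ε * a ^ 2) * (surfOmega n * ((r / a) ^ (2 - 2 * s) / (2 - 2 * s))) +
      2 * L * a * (surfOmega n * ((r / a) ^ (1 - 2 * s) / (2 * s - 1))) := by
  have hρ : 0 < r / a := by positivity
  obtain ⟨q1, q2⟩ := aux_quad n hn s (r / a) hs1 hρ (bT D T)
  obtain ⟨r1, r2⟩ := aux_G1 n hn s (r / a) hs1 hρ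
  obtain ⟨t1, t2⟩ := aux_G2 n hn s (r / a) hs hρ
  have hle : ∀ z, g (T z) / ‖z‖ ^ ((n : ℝ) + 2 * s) ≤
      (bT D T z z * G1 n s (r / a) ‖z‖ + ε * a ^ 2 * (‖z‖ ^ 2 * G1 n s (r / a) ‖z‖)) +
       2 * L * a * (‖z‖ * G2 n s (r / a) ‖z‖) := by
    intro z
    have hp : 0 ≤ 1 / ‖z‖ ^ ((n : ℝ) + 2 * s) := by positivity
    rw [div_eq_mul_one_div]
    have hTz := hT z
    by_cases h : ‖z‖ < r / a
    · simp only [G1, G2, if_pos h]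
      have h1 : ‖T z‖ < r := by
        refine hTz.trans_lt ?_
        rw [lt_div_iff₀ ha] at h; linarith
      have h2 : g (T z) ≤ bT D T z z + ε * a ^ 2 * ‖z‖ ^ 2 := by
        refine (hgD _ h1).trans ?_
        have : ‖T z‖ ^ 2 ≤ (a * ‖z‖) ^ 2 := by gcongr
        have := mul_le_mul_of_nonneg_left this hε
        simp only [bT, LinearMap.mk₂_apply]
        nlinarith
      have := mul_le_mul_of_nonneg_right h2 hp
      linarith
    · simp only [G1, G2, if_neg h]
      have h2 : g (T z) ≤ 2 * L * a * ‖z‖ := by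
        refine (hgL _).trans ?_
        have := mul_le_mul_of_nonneg_left hTz hL
        linarith
      have := mul_le_mul_of_nonneg_right h2 hp
      linarith
  have hI := (q1.add (r1.const_mul (ε * a ^ 2))).add (t1.const_mul (2 * L * a))
  have hgi : Integrable (fun z => g (T z) / ‖z‖ ^ ((n : ℝ) + 2 * s)) := by
    refine hI.mono' ?_ (Eventually.of_forall fun z => ?_)
    · have hm : Measurable fun z => g (T z) := (hg.comp (aux_T_cont T)).measurable
      exact (hm.div (by fun_prop)).aestronglyMeasurable
    · rw [Real.norm_eq_abs, abs_of_nonneg (div_nonneg (hg0 _) (by positivity))]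
      exact hle z
  refine ⟨hgi, (integral_mono hgi hI hle).trans (le_of_eq ?_)⟩
  rw [integral_add' (q1.add (r1.const_mul (ε * a ^ 2))) (t1.const_mul (2 * L * a)),
    integral_add' q1 (r1.const_mul (ε * a ^ 2)), integral_const_mul, integral_const_mul, q2, r2, t2]
  simp only [qs, bT, LinearMap.mk₂_apply]
  ring

lemma aux_lower (n : ℕ) (hn : 1 ≤ n) (s : ℝ) (hs1 : s < 1)
    (D : EuclideanSpace ℝ (Fin n) →L[ℝ] EuclideanSpace ℝ (Fin n) →L[ℝ] ℝ)
    (T : EuclideanSpace ℝ (Fin n) →ₗ[ℝ] EuclideanSpace ℝ (Fin n))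
    (a r κ : ℝ) (ha : 0 < a) (hr : 0 < r)
    (hT : ∀ z, ‖T z‖ ≤ a * ‖z‖) (g : EuclideanSpace ℝ (Fin n) → ℝ)
    (hg0 : ∀ y, 0 ≤ g y)
    (hgD : ∀ y, ‖y‖ < r → κ * D y y ≤ g y)
    (hgi : Integrable (fun z => g (T z) / ‖z‖ ^ ((n : ℝ) + 2 * s))) :
    κ * (qs D T / n) * (surfOmega n * ((r / a) ^ (2 - 2 * s) / (2 - 2 * s))) ≤
    ∫ z, g (T z) / ‖z‖ ^ ((n : ℝ) + 2 * s) := by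
  have hρ : 0 < r / a := by positivity
  obtain ⟨q1, q2⟩ := aux_quad n hn s (r / a) hs1 hρ (bT D T)
  have hle : ∀ z, κ * (bT D T z z * G1 n s (r / a) ‖z‖) ≤ g (T z) / ‖z‖ ^ ((n : ℝ) + 2 * s) := by
    intro z
    have hp : 0 ≤ 1 / ‖z‖ ^ ((n : ℝ) + 2 * s) := by positivity
    have hTz := hT z
    by_cases h : ‖z‖ < r / a
    · rw [div_eq_mul_one_div (g (T z))]
      simp only [G1, if_pos h]
      have h1 : ‖T z‖ < r := by
        refine hTz.trans_lt ?_
        rw [lt_div_iff₀ ha] at h; linarith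
      have := mul_le_mul_of_nonneg_right (hgD _ h1) hp
      simp only [bT, LinearMap.mk₂_apply]
      linarith
    · simp only [G1, if_neg h]
      simp only [mul_zero]
      exact div_nonneg (hg0 _) (by positivity)
  refine le_trans (le_of_eq ?_) (integral_mono (q1.const_mul κ) hgi hle)
  rw [integral_const_mul, q2]
  simp only [qs, bT, LinearMap.mk₂_apply]
  ring

lemma aux_trace {n : ℕ} (u : EuclideanSpace ℝ (Fin n) → ℝ) (hC2 : ContDiff ℝ 2 u)
    (x : EuclideanSpace ℝ (Fin n)) (A : Matrix (Fin n) (Fin n) ℝ) :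
    (A * Aᵀ * hess u x).trace = qs (fderiv ℝ (fderiv ℝ u) x) (Matrix.toEuclideanLin A) := by
  have hf : Differentiable ℝ (fderiv ℝ u) :=
    (hC2.fderiv_right (m := 1) (by norm_num)).differentiable (by norm_num)
  have hh : ∀ i j, hess u x i j = fderiv ℝ (fderiv ℝ u) x (EuclideanSpace.single i 1)
      (EuclideanSpace.single j 1) := by
    intro i j
    simp only [hess, Matrix.of_apply]
    rw [fderiv_clm_apply (hf x) (by fun_prop)]
    simp
  set D := fderiv ℝ (fderiv ℝ u) x
  have hTe : ∀ k, Matrix.toEuclideanLin A (EuclideanSpace.single k 1) =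
      ∑ i, A i k • EuclideanSpace.single i (1 : ℝ) := by
    intro k
    ext i
    simp [Matrix.toLpLin_apply, Finset.sum_apply, Pi.single_apply]
  simp only [qs, hTe, map_sum, map_smul, _root_.sum_apply,
    _root_.smul_apply, ← hh, smul_eq_mul]
  simp only [Matrix.trace, Matrix.diag_apply, Matrix.mul_apply, Matrix.transpose_apply,
    Finset.mul_sum, Finset.sum_mul]
  conv_rhs => rw [Finset.sum_comm]
  refine Finset.sum_congr rfl fun i _ => ?_
  conv_rhs => rw [Finset.sum_comm]
  refine Finset.sum_congr rfl fun j _ => Finset.sum_congr rfl fun k _ => ?_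
  ring

noncomputable def fro {n : ℕ} (T : EuclideanSpace ℝ (Fin n) →ₗ[ℝ] EuclideanSpace ℝ (Fin n)) : ℝ :=
  √(∑ k, ‖T (EuclideanSpace.single k 1)‖ ^ 2)

lemma aux_fro {n : ℕ} (T : EuclideanSpace ℝ (Fin n) →ₗ[ℝ] EuclideanSpace ℝ (Fin n))
    (z : EuclideanSpace ℝ (Fin n)) : ‖T z‖ ≤ fro T * ‖z‖ := by
  have hz : z = ∑ k, z k • EuclideanSpace.single k (1 : ℝ) := by
    ext i
    simp [Finset.sum_apply, Pi.single_apply]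
  conv_lhs => rw [hz]
  rw [map_sum]
  refine (norm_sum_le _ _).trans ?_
  simp only [map_smul, norm_smul]
  refine (Real.sum_mul_le_sqrt_mul_sqrt _ _ _).trans (le_of_eq ?_)
  rw [EuclideanSpace.norm_eq, mul_comm, fro]

lemma aux_fro_pos {n : ℕ} (hn : 1 ≤ n) (A : Matrix (Fin n) (Fin n) ℝ) (hA : A.det = 1) :
    0 < fro (Matrix.toEuclideanLin A) := by
  have h0 : 0 ≤ fro (Matrix.toEuclideanLin A) := Real.sqrt_nonneg _
  rcases h0.lt_or_eq with h | h
  · exact h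
  exfalso
  have hT : Matrix.toEuclideanLin A = 0 := by
    ext1 z
    have := aux_fro (Matrix.toEuclideanLin A) z
    rw [← h, zero_mul] at this
    simpa using this
  have : A = 0 := by simpa using hT
  have : Nonempty (Fin n) := ⟨⟨0, hn⟩⟩
  simp_all

lemma aux_degenerate {n : ℕ} (hn : 1 ≤ n)
    (D : EuclideanSpace ℝ (Fin n) →L[ℝ] EuclideanSpace ℝ (Fin n) →L[ℝ] ℝ)
    (v : EuclideanSpace ℝ (Fin n)) (hv : ‖v‖ = 1) (hD : D v v = 0) (ε : ℝ) (hε : 0 < ε)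
    (hε1 : ε ≤ 1) :
    ∃ A : Matrix (Fin n) (Fin n) ℝ, A.PosDef ∧ A.det = 1 ∧
      qs D (Matrix.toEuclideanLin A) = ε ^ 2 * qs D LinearMap.id := by
  set c : ℝ := (ε ^ n)⁻¹ - 1 with hc
  have hpow : 0 < ε ^ n := by positivity
  have hc0 : 0 ≤ c := by
    have : 1 ≤ (ε ^ n)⁻¹ := (one_le_inv₀ hpow).2 (pow_le_one₀ hε.le hε1)
    linarith
  have hvv : v.ofLp ⬝ᵥ v.ofLp = 1 := by
    have h := EuclideanSpace.real_norm_sq_eq v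
    rw [hv] at h
    simp only [dotProduct]
    rw [one_pow] at h
    rw [h]
    exact Finset.sum_congr rfl fun i _ => by ring
  refine ⟨ε • (1 + c • Matrix.vecMulVec v.ofLp v.ofLp), ?_, ?_, ?_⟩
  · refine Matrix.PosDef.smul ?_ hε
    refine Matrix.PosDef.add_posSemidef Matrix.PosDef.one ?_
    refine Matrix.PosSemidef.smul ?_ hc0
    simpa using Matrix.posSemidef_vecMulVec_self_star v.ofLp
  · rw [Matrix.det_smul, Fintype.card_fin, ← Matrix.smul_vecMulVec,
      Matrix.vecMulVec_eq Unit, Matrix.det_one_add_replicateCol_mul_replicateRow,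
      dotProduct_smul, hvv, hc]
    simp
    field_simp
  · have hTe : ∀ k, Matrix.toEuclideanLin (ε • (1 + c • Matrix.vecMulVec v.ofLp v.ofLp))
        (EuclideanSpace.single k 1) = ε • (EuclideanSpace.single k (1 : ℝ) + (c * v k) • v) := by
      intro k
      ext i
      simp [Matrix.toLpLin_apply, Matrix.vecMulVec_apply]
      exact Or.inl (by ring)
    have hz : v = ∑ k, v k • EuclideanSpace.single k (1 : ℝ) := by
      ext i
      simp [Finset.sum_apply, Pi.single_apply]
    have h1 : ∑ k, v k * D (EuclideanSpace.single k 1) v = 0 := by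
      have h := congrArg (fun w => D w v) hz
      simp only [map_sum, map_smul, _root_.sum_apply, _root_.smul_apply, smul_eq_mul] at h
      rw [← h, hD]
    have h2 : ∑ k, v k * D v (EuclideanSpace.single k 1) = 0 := by
      rw [← hD]
      conv_rhs => arg 2; rw [hz]
      simp only [map_sum, map_smul, smul_eq_mul]
    simp only [qs, hTe, LinearMap.id_apply, Finset.mul_sum]
    have : ∀ k, D (ε • (EuclideanSpace.single k (1 : ℝ) + (c * v k) • v))
        (ε • (EuclideanSpace.single k (1 : ℝ) + (c * v k) • v)) =
        ε ^ 2 * D (EuclideanSpace.single k 1) (EuclideanSpace.single k 1)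
        + ε ^ 2 * c * (v k * D (EuclideanSpace.single k 1) v)
        + ε ^ 2 * c * (v k * D v (EuclideanSpace.single k 1)) := by
      intro k
      simp [hD]
      ring
    simp only [this, Finset.sum_add_distrib, ← Finset.mul_sum, h1, h2]
    simp

lemma aux_coercive {n : ℕ} (hn : 1 ≤ n)
    (D : EuclideanSpace ℝ (Fin n) →L[ℝ] EuclideanSpace ℝ (Fin n) →L[ℝ] ℝ)
    (hpsd : ∀ v, 0 ≤ D v v) :
    (∃ v, ‖v‖ = 1 ∧ D v v = 0) ∨ ∃ l > 0, ∀ v, l * ‖v‖ ^ 2 ≤ D v v := by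
  have : Nonempty (Fin n) := ⟨⟨0, hn⟩⟩
  have hne : (Metric.sphere (0 : EuclideanSpace ℝ (Fin n)) 1).Nonempty :=
    NormedSpace.sphere_nonempty.2 zero_le_one
  obtain ⟨v, hv, hmin⟩ := (isCompact_sphere (0 : EuclideanSpace ℝ (Fin n)) 1).exists_isMinOn hne
    (f := fun v => D v v) (by fun_prop)
  have hv1 : ‖v‖ = 1 := by simpa using hv
  rcases (hpsd v).eq_or_lt with h | h
  · exact Or.inl ⟨v, hv1, h.symm⟩
  · refine Or.inr ⟨D v v, h, fun w => ?_⟩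
    by_cases hw : w = 0
    · simp [hw]
    have hw' : 0 < ‖w‖ := norm_pos_iff.2 hw
    have h2 := isMinOn_iff.1 hmin (‖w‖⁻¹ • w) (by simp [norm_smul, hw'.ne'])
    simp only [map_smul, _root_.smul_apply, smul_eq_mul] at h2
    have h3 := mul_le_mul_of_nonneg_right h2 (sq_nonneg ‖w‖)
    refine h3.trans (le_of_eq ?_)
    field_simp

lemma aux_rpow (F I a l r s : ℝ) (hI : 0 ≤ I) (hIF : I ≤ F) (ha : 0 < a) (hl : 0 < l) (hr : 0 < r)
    (hF : l * a ^ 2 ≤ F) (hs0 : 0 < s) (hs : s < 1) :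
    r ^ (2 - 2 * s) * l ^ (1 - s) * I ^ s ≤ F * (r / a) ^ (2 - 2 * s) := by
  have hFp : 0 < F := lt_of_lt_of_le (by positivity) hF
  have h1 : I ^ s ≤ F ^ s := Real.rpow_le_rpow hI hIF hs0.le
  have h2 : a ^ (2 - 2 * s) * l ^ (1 - s) ≤ F ^ (1 - s) := by
    have : a ^ (2 - 2 * s) = (a ^ 2) ^ (1 - s) := by
      rw [← Real.rpow_natCast, ← Real.rpow_mul ha.le]
      congr 1; push_cast; ring
    rw [this, ← Real.mul_rpow (by positivity) hl.le, mul_comm]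
    exact Real.rpow_le_rpow (by positivity) hF (by linarith)
  have h3 : F ^ (1 - s) * F ^ s = F := by
    rw [← Real.rpow_add hFp]; simp
  rw [Real.div_rpow hr.le ha.le, ← mul_div_assoc, le_div_iff₀ (by positivity)]
  have hr' : 0 < r ^ (2 - 2 * s) := by positivity
  calc r ^ (2 - 2 * s) * l ^ (1 - s) * I ^ s * a ^ (2 - 2 * s)
      = r ^ (2 - 2 * s) * ((a ^ (2 - 2 * s) * l ^ (1 - s)) * I ^ s) := by ring
    _ ≤ r ^ (2 - 2 * s) * (F ^ (1 - s) * F ^ s) := by gcongr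
    _ = F * r ^ (2 - 2 * s) := by rw [h3]; ring

theorem stmt9 (n : ℕ) (hn : 1 ≤ n) (u : EuclideanSpace ℝ (Fin n) → ℝ)
    (hconv : ConvexOn ℝ Set.univ u) (hC2 : ContDiff ℝ 2 u)
    (L : ℝ) (hLip : ∀ a b : EuclideanSpace ℝ (Fin n), |u a - u b| ≤ L * ‖a - b‖)
    (x : EuclideanSpace ℝ (Fin n)) :
    Tendsto (fun s : ℝ => (1 - s) *
        sInf {z : ℝ | ∃ A : Matrix (Fin n) (Fin n) ℝ, A.PosDef ∧ A.det = 1 ∧ z = LA s A u x})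
      (nhdsWithin 1 (Set.Ioo (1 / 2 : ℝ) 1))
      (nhds (surfOmega n / (4 * n) *
        sInf {z : ℝ | ∃ A : Matrix (Fin n) (Fin n) ℝ, A.PosDef ∧ A.det = 1 ∧
          z = (A * Aᵀ * hess u x).trace})) := by
  set D := fderiv ℝ (fderiv ℝ u) x with hD
  have hn' : (0 : ℝ) < n := by exact_mod_cast hn
  have hω : 0 < surfOmega n := by
    unfold surfOmega
    have : 0 < Real.Gamma ((n : ℝ) / 2) := Real.Gamma_pos_of_pos (by positivity)
    positivity
  have hpsd : ∀ v, 0 ≤ D v v := aux_psd u hconv hC2 x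
  have hδ0 := aux_delta_nonneg u hconv x
  have hδc : Continuous (delta2 u x) := by
    have := hC2.continuous
    unfold delta2; fun_prop
  simp only [aux_trace u hC2 x, ← hD]
  set S1 : ℝ → Set ℝ := fun s =>
    {z : ℝ | ∃ A : Matrix (Fin n) (Fin n) ℝ, A.PosDef ∧ A.det = 1 ∧ z = LA s A u x} with hS1
  set S2 : Set ℝ := {z : ℝ | ∃ A : Matrix (Fin n) (Fin n) ℝ, A.PosDef ∧ A.det = 1 ∧
          z = qs D (Matrix.toEuclideanLin A)} with hS2
  change Tendsto (fun s => (1 - s) * sInf (S1 s)) _ _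
  have hLA0 : ∀ s A, A.det = 1 → 0 ≤ LA s A u x := by
    intro s A hA
    rw [aux_LA s A hA]
    have : 0 ≤ ∫ z, delta2 u x (Matrix.toEuclideanLin A z) / ‖z‖ ^ ((n : ℝ) + 2 * s) :=
      integral_nonneg fun z => div_nonneg (hδ0 _) (by positivity)
    positivity
  have hS1b : ∀ s, ∀ z ∈ S1 s, 0 ≤ z := by
    rintro s z ⟨A, -, hA, rfl⟩; exact hLA0 s A hA
  have hS2b : ∀ z ∈ S2, 0 ≤ z := by
    rintro z ⟨A, -, hA, rfl⟩; exact Finset.sum_nonneg fun k _ => hpsd _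
  have hS1n : ∀ s, (S1 s).Nonempty := fun s => ⟨_, 1, Matrix.PosDef.one, Matrix.det_one, rfl⟩
  have hS2n : S2.Nonempty := ⟨_, 1, Matrix.PosDef.one, Matrix.det_one, rfl⟩
  have hS2bb : BddBelow S2 := ⟨0, hS2b⟩
  have hI0 : 0 ≤ sInf S2 := Real.sInf_nonneg hS2b
  set I := sInf S2 with hI
  have hmem : ∀ᶠ s in nhdsWithin (1 : ℝ) (Set.Ioo (1 / 2 : ℝ) 1), s ∈ Set.Ioo (1 / 2 : ℝ) 1 :=
    eventually_mem_nhdsWithin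
  rw [tendsto_order]
  constructor
  · intro b hb
    rcases aux_coercive hn D hpsd with ⟨v, hv, hDv⟩ | ⟨l, hl, hcoer⟩
    · -- degenerate
      have hIz : I ≤ 0 := by
        have hlim : Tendsto (fun ε : ℝ => ε ^ 2 * qs D LinearMap.id) (nhdsWithin 0 (Set.Ioi 0))
            (nhds 0) := by
          have : ContinuousAt (fun ε : ℝ => ε ^ 2 * qs D LinearMap.id) 0 := by fun_prop
          simpa using (this.tendsto).mono_left nhdsWithin_le_nhds
        refine ge_of_tendsto hlim ?_
        filter_upwards [Ioc_mem_nhdsGT (zero_lt_one' ℝ)] with ε hε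
        obtain ⟨A, h1, h2, h3⟩ := aux_degenerate hn D v hv hDv ε hε.1 hε.2
        rw [← h3]
        exact csInf_le hS2bb ⟨A, h1, h2, rfl⟩
      have hI00 : I = 0 := le_antisymm hIz hI0
      rw [hI00, mul_zero] at hb
      filter_upwards [hmem] with s hs
      exact hb.trans_le (mul_nonneg (by linarith [hs.2]) (Real.sInf_nonneg (hS1b s)))
    · obtain ⟨η, hη0, hη1, hηb⟩ : ∃ η : ℝ, 0 < η ∧ η ≤ 1 ∧
          b < (1 - η) * (surfOmega n / (4 * n) * I) := by
        have hlim : Tendsto (fun η : ℝ => (1 - η) * (surfOmega n / (4 * n) * I))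
            (nhdsWithin 0 (Set.Ioi 0)) (nhds (surfOmega n / (4 * n) * I)) := by
          have : ContinuousAt (fun η : ℝ => (1 - η) * (surfOmega n / (4 * n) * I)) 0 := by fun_prop
          simpa using (this.tendsto).mono_left nhdsWithin_le_nhds
        obtain ⟨η, h1, h2⟩ := ((hlim.eventually (lt_mem_nhds hb)).and
          (Ioc_mem_nhdsGT (zero_lt_one' ℝ))).exists
        exact ⟨η, h2.1, h2.2, h1⟩
      obtain ⟨r, hr, htay⟩ := aux_taylor u hC2 x (η * l) (by positivity)
      have hlow : ∀ y, ‖y‖ < r → (1 - η) * D y y ≤ delta2 u x y := by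
        intro y hy
        have h1 := (abs_le.1 (htay y hy)).1
        have h2 := mul_le_mul_of_nonneg_left (hcoer y) hη0.le
        rw [← hD] at h1
        linarith
      have hup : ∀ y, ‖y‖ < r → delta2 u x y ≤ D y y + η * l * ‖y‖ ^ 2 := by
        intro y hy
        have h1 := (abs_le.1 (htay y hy)).2
        rw [← hD] at h1
        linarith
      have hlim : Tendsto (fun s : ℝ => (1 - η) * (surfOmega n / (4 * n) *
          (r ^ (2 - 2 * s) * l ^ (1 - s) * I ^ s))) (nhdsWithin 1 (Set.Ioo (1 / 2 : ℝ) 1))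
          (nhds ((1 - η) * (surfOmega n / (4 * n) * I))) := by
        have c1 : ContinuousAt (fun s : ℝ => r ^ (2 - 2 * s)) 1 :=
          ContinuousAt.rpow (by fun_prop) (by fun_prop) (Or.inl hr.ne')
        have c2 : ContinuousAt (fun s : ℝ => l ^ (1 - s)) 1 :=
          ContinuousAt.rpow (by fun_prop) (by fun_prop) (Or.inl hl.ne')
        have c3 : ContinuousAt (fun s : ℝ => I ^ s) 1 :=
          ContinuousAt.rpow (by fun_prop) (by fun_prop) (Or.inr one_pos)
        have c4 : ContinuousAt (fun s : ℝ => (1 - η) * (surfOmega n / (4 * n) *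
          (r ^ (2 - 2 * s) * l ^ (1 - s) * I ^ s))) 1 :=
          continuousAt_const.mul (continuousAt_const.mul ((c1.mul c2).mul c3))
        simpa using (c4.tendsto).mono_left nhdsWithin_le_nhds
      filter_upwards [hmem, hlim.eventually (lt_mem_nhds hηb)] with s hs hsb
      refine hsb.trans_le ?_
      have h1s : 0 < 1 - s := by linarith [hs.2]
      rw [mul_comm (1 - s), ← div_le_iff₀ h1s]
      refine le_csInf (hS1n s) ?_
      rintro z ⟨A, hApos, hA, rfl⟩
      rw [div_le_iff₀ h1s]
      set T := Matrix.toEuclideanLin A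
      have ha : 0 < fro T := aux_fro_pos hn A hA
      have hint := (aux_upper n hn s hs.1 hs.2 D T (fro T) r (η * l) |L| ha hr (by positivity)
        (abs_nonneg L) (aux_fro T) (delta2 u x) hδc hδ0 (aux_delta_le u L hLip x) hup).1
      have hmain := aux_lower n hn s hs.2 D T (fro T) r (1 - η) ha hr (aux_fro T) (delta2 u x) hδ0
        hlow hint
      have hIF : I ≤ qs D T := csInf_le hS2bb ⟨A, hApos, hA, rfl⟩
      have hF : l * fro T ^ 2 ≤ qs D T := by
        rw [fro, Real.sq_sqrt (Finset.sum_nonneg fun k _ => sq_nonneg _), Finset.mul_sum]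
        exact Finset.sum_le_sum fun k _ => hcoer _
      have hp := aux_rpow (qs D T) I (fro T) l r s hI0 hIF ha hl hr hF (by linarith [hs.1]) hs.2
      rw [aux_LA s A hA]
      have h1η : 0 ≤ 1 - η := by linarith
      calc (1 - η) * (surfOmega n / (4 * n) * (r ^ (2 - 2 * s) * l ^ (1 - s) * I ^ s))
          ≤ (1 - η) * (surfOmega n / (4 * n) * (qs D T * (r / fro T) ^ (2 - 2 * s))) := by gcongr
        _ = 1 / 2 * ((1 - η) * (qs D T / n) *
              (surfOmega n * ((r / fro T) ^ (2 - 2 * s) / (2 - 2 * s)))) * (1 - s) := by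
            have : 2 - 2 * s = 2 * (1 - s) := by ring
            generalize (r / fro T) ^ (2 - 2 * s) = X
            rw [this]
            field_simp
            ring
        _ ≤ _ := by gcongr
  · intro b hb
    have hc : 0 < surfOmega n / (4 * n) := by positivity
    obtain ⟨F, ⟨A, hApos, hA, rfl⟩, hFb⟩ : ∃ F ∈ S2, F < b / (surfOmega n / (4 * n)) := by
      refine exists_lt_of_csInf_lt hS2n ?_
      rw [lt_div_iff₀ hc]; linarith
    rw [lt_div_iff₀ hc] at hFb
    set T := Matrix.toEuclideanLin A
    have ha : 0 < fro T := aux_fro_pos hn A hA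
    obtain ⟨ε, hε, hεb⟩ : ∃ ε : ℝ, 0 < ε ∧
        surfOmega n / 4 * (qs D T / n + ε * fro T ^ 2) < b := by
      have hlim : Tendsto (fun ε : ℝ => surfOmega n / 4 * (qs D T / n + ε * fro T ^ 2))
          (nhdsWithin 0 (Set.Ioi 0)) (nhds (surfOmega n / 4 * (qs D T / n))) := by
        have : ContinuousAt (fun ε : ℝ => surfOmega n / 4 * (qs D T / n + ε * fro T ^ 2)) 0 := by
          fun_prop
        simpa using (this.tendsto).mono_left nhdsWithin_le_nhds
      have hlt : surfOmega n / 4 * (qs D T / n) < b := by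
        refine lt_of_eq_of_lt ?_ hFb
        field_simp
      obtain ⟨ε, h1, h2⟩ := ((hlim.eventually (gt_mem_nhds hlt)).and
          (Ioc_mem_nhdsGT (zero_lt_one' ℝ))).exists
      exact ⟨ε, h2.1, h1⟩
    obtain ⟨r, hr, htay⟩ := aux_taylor u hC2 x ε hε
    have hup : ∀ y, ‖y‖ < r → delta2 u x y ≤ D y y + ε * ‖y‖ ^ 2 := by
      intro y hy
      have h1 := (abs_le.1 (htay y hy)).2
      rw [← hD] at h1
      linarith
    have hρ : 0 < r / fro T := by positivity
    have hlim : Tendsto (fun s : ℝ => surfOmega n / 4 * (qs D T / n + ε * fro T ^ 2) *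
        (r / fro T) ^ (2 - 2 * s) + (1 - s) * (|L| * fro T * (surfOmega n *
          ((r / fro T) ^ (1 - 2 * s) / (2 * s - 1))))) (nhdsWithin 1 (Set.Ioo (1 / 2 : ℝ) 1))
        (nhds (surfOmega n / 4 * (qs D T / n + ε * fro T ^ 2))) := by
      have c1 : ContinuousAt (fun s : ℝ => (r / fro T) ^ (2 - 2 * s)) 1 :=
        ContinuousAt.rpow (by fun_prop) (by fun_prop) (Or.inl hρ.ne')
      have c2 : ContinuousAt (fun s : ℝ => (r / fro T) ^ (1 - 2 * s)) 1 :=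
        ContinuousAt.rpow (by fun_prop) (by fun_prop) (Or.inl hρ.ne')
      have c3 : ContinuousAt (fun s : ℝ => (r / fro T) ^ (1 - 2 * s) / (2 * s - 1)) 1 :=
        c2.div (by fun_prop) (by norm_num)
      have c5 : ContinuousAt (fun s : ℝ => 1 - s) 1 := by fun_prop
      have c4 : ContinuousAt (fun s : ℝ => surfOmega n / 4 * (qs D T / n + ε * fro T ^ 2) *
        (r / fro T) ^ (2 - 2 * s) + (1 - s) * (|L| * fro T * (surfOmega n *
          ((r / fro T) ^ (1 - 2 * s) / (2 * s - 1))))) 1 :=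
        (continuousAt_const.mul c1).add
          (c5.mul (continuousAt_const.mul (continuousAt_const.mul c3)))
      simpa using (c4.tendsto).mono_left nhdsWithin_le_nhds
    filter_upwards [hmem, hlim.eventually (gt_mem_nhds hεb)] with s hs hsb
    refine lt_of_le_of_lt ?_ hsb
    have h1s : 0 < 1 - s := by linarith [hs.2]
    have hle : sInf (S1 s) ≤ LA s A u x := csInf_le ⟨0, hS1b s⟩ ⟨A, hApos, hA, rfl⟩
    have hmain := (aux_upper n hn s hs.1 hs.2 D T (fro T) r ε |L| ha hr hε.le
        (abs_nonneg L) (aux_fro T) (delta2 u x) hδc hδ0 (aux_delta_le u L hLip x) hup).2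
    rw [aux_LA s A hA] at hle
    calc (1 - s) * sInf (S1 s) ≤ (1 - s) * (1 / 2 * ((qs D T / n + ε * fro T ^ 2) *
          (surfOmega n * ((r / fro T) ^ (2 - 2 * s) / (2 - 2 * s))) +
      2 * |L| * fro T * (surfOmega n * ((r / fro T) ^ (1 - 2 * s) / (2 * s - 1))))) := by
          refine mul_le_mul_of_nonneg_left (hle.trans ?_) h1s.le
          exact mul_le_mul_of_nonneg_left hmain (by norm_num)
      _ = _ := by
        have : 2 - 2 * s = 2 * (1 - s) := by ring
        generalize (r / fro T) ^ (2 - 2 * s) = X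
        generalize (r / fro T) ^ (1 - 2 * s) / (2 * s - 1) = Y
        rw [this]
        field_simp
        ring
end
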